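/- Let A ∈ {0,1}^{n×n} be a random symmetric adjacency matrix with zero diagonal such that A_{uv} ~ Bernoulli(P_{uv}) independently for all u > v, where P ∈ [0,1]^{n×n} is symmetric, and set p_max = max over u ≥ v of P_{uv} and d = e·(n·p_max + 1). For any C' > 0 there exists C > 0 such that for any τ > 0, with probability at least 1 − n^{−C'}, there exists a subset J ⊆ [n] satisfying n − |J| ≤ n/d and ‖(L(A_τ) − L(P_τ))_{J×J}‖ ≤ C·(√(d·log d)·(d + τ)/τ² + √d/τ), where for a matrix M, M_{J×J} denotes the matrix that agrees with M on entries indexed by J×J and is zero elsewhere. -/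

import Mathlib

open scoped BigOperators
open Filter

namespace SBM

noncomputable section

/-- Adjacency matrices of graphs on `n` nodes. -/
abbrev Adj (n : ℕ) := Fin n → Fin n → Bool

/-- 0/1 real value of an entry of the adjacency matrix. -/
def aVal {n : ℕ} (A : Adj n) (u v : Fin n) : ℝ := if A u v then 1 else 0

/-- Probability weight of one adjacency matrix under the SBM with edge
probability matrix `P`: the entries above the diagonal are independent
Bernoulli, the matrix is symmetric with zero diagonal. -/
def weight {n : ℕ} (P : Matrix (Fin n) (Fin n) ℝ) (A : Adj n) : ℝ :=
  if (∀ u, A u u = false) ∧ (∀ u v, A u v = A v u) then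
    ∏ u : Fin n, ∏ v : Fin n,
      if u < v then (if A u v then P u v else 1 - P u v) else 1
  else 0

/-- Probability of a set of adjacency matrices under the SBM with edge
probability matrix `P`. -/
def prob {n : ℕ} (P : Matrix (Fin n) (Fin n) ℝ) (S : Set (Adj n)) : ℝ :=
  ∑ A : Adj n, S.indicator (weight P) A

/-- The edge probability matrix `P u v = B (σ u) (σ v)`. -/
def pMat {n k : ℕ} (B : Matrix (Fin k) (Fin k) ℝ) (σ : Fin n → Fin k) :
    Matrix (Fin n) (Fin n) ℝ := fun u v => B (σ u) (σ v)

/-- Size of the `i`-th community of a label assignment. -/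
def comSize {n k : ℕ} (σ : Fin n → Fin k) (i : Fin k) : ℝ :=
  ((Finset.univ.filter fun u => σ u = i).card : ℝ)

/-- Hamming loss `ℓ0`. -/
def l0 {n k : ℕ} (σ1 σ2 : Fin n → Fin k) : ℝ :=
  ((Finset.univ.filter fun u => σ1 u ≠ σ2 u).card : ℝ) / n

/-- Misclassification proportion: minimum of `ℓ0` over relabelings. -/
def misclass {n k : ℕ} (σh σ : Fin n → Fin k) : ℝ :=
  ⨅ π : Equiv.Perm (Fin k), l0 σh (fun u => π (σ u))

/-- Euclidean norm of a vector. -/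
def sqnorm {n : ℕ} (x : Fin n → ℝ) : ℝ := Real.sqrt (∑ i, x i ^ 2)

/-- Operator (spectral) norm of a square matrix. -/
def opNorm {n : ℕ} (M : Matrix (Fin n) (Fin n) ℝ) : ℝ :=
  sSup { t : ℝ | ∃ x : Fin n → ℝ, sqnorm x = 1 ∧ t = sqnorm (M.mulVec x) }

/-- The `k`-th largest singular value of a square matrix, via the
Courant–Fischer max-min characterization. -/
def kthSingular {n : ℕ} (M : Matrix (Fin n) (Fin n) ℝ) (k : ℕ) : ℝ :=
  sSup { t : ℝ | 0 ≤ t ∧ ∃ V : Submodule ℝ (Fin n → ℝ),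
    Module.finrank ℝ V = k ∧ ∀ x ∈ V, t * sqnorm x ≤ sqnorm (M.mulVec x) }

/-- The Rényi divergence of order 1/2, `I*`. -/
def renyiHalf (n : ℕ) (a b : ℝ) : ℝ :=
  -2 * Real.log (Real.sqrt ((a / n) * (b / n)) +
    Real.sqrt ((1 - a / n) * (1 - b / n)))

/-- The balanced parameter space `Θ₀(n,k,a,b,β)`. -/
def Theta0 (n k : ℕ) (a b β : ℝ) :
    Set (Matrix (Fin k) (Fin k) ℝ × (Fin n → Fin k)) :=
  { p | (∀ i, (n : ℝ) / (β * k) - 1 ≤ comSize p.2 i ∧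
          comSize p.2 i ≤ β * n / k + 1) ∧
        (∀ i, p.1 i i = a / n) ∧ ∀ i j, i ≠ j → p.1 i j = b / n }

/-- Average of the off-diagonal entries of a `k × k` matrix. -/
def offDiagAvg {k : ℕ} (B : Matrix (Fin k) (Fin k) ℝ) : ℝ :=
  (1 / ((k : ℝ) * ((k : ℝ) - 1))) *
    ∑ i : Fin k, ∑ j : Fin k, if i ≠ j then B i j else 0

/-- The general parameter space `Θ(n,k,a,b,λ,β;α)`. -/
def ThetaGen (n k : ℕ) (a b lam β α : ℝ) :
    Set (Matrix (Fin k) (Fin k) ℝ × (Fin n → Fin k)) :=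
  { p | (∀ i, (n : ℝ) / (β * k) - 1 ≤ comSize p.2 i ∧
          comSize p.2 i ≤ β * n / k + 1) ∧
        (∀ i j, p.1 i j = p.1 j i) ∧
        (∀ i j, 0 ≤ p.1 i j ∧ p.1 i j ≤ 1) ∧
        b / (α * n) ≤ offDiagAvg p.1 ∧
        (∀ i j, i ≠ j → p.1 i j ≤ b / n) ∧
        (∃ i j, i ≠ j ∧ p.1 i j = b / n) ∧
        (∀ i, a / n ≤ p.1 i i) ∧ (∃ i, p.1 i i = a / n) ∧
        (∀ i, p.1 i i ≤ α * a / n) ∧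
        lam ≤ kthSingular (pMat p.1 p.2) k }

/-- The estimated community `C̃ᵢᵘ` (node `u` itself is excluded). -/
def cluster {n k : ℕ} (u : Fin n) (s : Fin n → Fin k) (i : Fin k) :
    Finset (Fin n) :=
  Finset.univ.filter fun v => v ≠ u ∧ s v = i

/-- Number of edges within a set of nodes. -/
def edgesWithin {n : ℕ} (A : Adj n) (C : Finset (Fin n)) : ℝ :=
  (∑ v ∈ C, ∑ w ∈ C, aVal A v w) / 2

/-- Number of edges between two disjoint sets of nodes. -/
def edgesBetween {n : ℕ} (A : Adj n) (C D : Finset (Fin n)) : ℝ :=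
  ∑ v ∈ C, ∑ w ∈ D, aVal A v w

/-- The connectivity estimates `B̂ᵢⱼᵘ` of Algorithm 1, based on the initial
assignment `s = σ⁰ᵤ`. -/
def hatB {n k : ℕ} (A : Adj n) (u : Fin n) (s : Fin n → Fin k) (i j : Fin k) :
    ℝ :=
  if i = j then
    edgesWithin A (cluster u s i) /
      (((cluster u s i).card : ℝ) * (((cluster u s i).card : ℝ) - 1) / 2)
  else
    edgesBetween A (cluster u s i) (cluster u s j) /
      (((cluster u s i).card : ℝ) * ((cluster u s j).card : ℝ))

/-- `â_u = n · minᵢ B̂ᵢᵢᵘ`. -/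
def hata {n k : ℕ} (A : Adj n) (u : Fin n) (s : Fin n → Fin k) : ℝ :=
  n * ⨅ i : Fin k, hatB A u s i i

/-- `b̂_u = n · maxᵢ≠ⱼ B̂ᵢⱼᵘ`. -/
def hatb {n k : ℕ} (A : Adj n) (u : Fin n) (s : Fin n → Fin k) : ℝ :=
  n * sSup { x : ℝ | ∃ i j : Fin k, i ≠ j ∧ x = hatB A u s i j }

/-- `t = ½ log (â (1 − b̂/n) / (b̂ (1 − â/n)))`. -/
def tStat (n : ℕ) (ha hb : ℝ) : ℝ :=
  Real.log (ha * (1 - hb / n) / (hb * (1 - ha / n))) / 2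

/-- `ρ = −(1/(2t)) log (((â/n)e^{−t} + 1 − â/n)/((b̂/n)e^{t} + 1 − b̂/n))`. -/
def rhoStat (n : ℕ) (ha hb t : ℝ) : ℝ :=
  -(Real.log (((ha / n) * Real.exp (-t) + 1 - ha / n) /
      ((hb / n) * Real.exp t + 1 - hb / n))) / (2 * t)

/-- Penalized vote of node `u` for label `l`. -/
def vote {n k : ℕ} (A : Adj n) (u : Fin n) (s : Fin n → Fin k) (ρ : ℝ)
    (l : Fin k) : ℝ :=
  (∑ v ∈ cluster u s l, aVal A u v) - ρ * ((cluster u s l).card : ℝ)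

/-- `lbl` maximizes the penalized vote of node `u`. -/
def VoteMax {n k : ℕ} (A : Adj n) (u : Fin n) (s : Fin n → Fin k) (ρ : ℝ)
    (lbl : Fin k) : Prop :=
  ∀ l : Fin k, vote A u s ρ l ≤ vote A u s ρ lbl

/-- `|{v : σU_{u1}(v) = l} ∩ {v : σU_u(v) = σU_u(u)}|`. -/
def consensusCount {n k : ℕ} (σU : Fin n → Fin n → Fin k) (u1 u : Fin n)
    (l : Fin k) : ℕ :=
  (Finset.univ.filter fun v => σU u1 v = l ∧ σU u v = σU u u).card

/-- Specification of the refinement-plus-consensus scheme of Algorithm 1, with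
an arbitrary family of penalties `ρ`.  `σ0 u` is the initial assignment
`σ⁰ᵤ`, `σU u` is the refined assignment `σ̂ᵤ`, `σhat` is the final output. -/
def RefineSpec {n k : ℕ} (A : Adj n) (σ0 σU : Fin n → Fin n → Fin k)
    (ρ : Fin n → ℝ) (σhat : Fin n → Fin k) : Prop :=
  (∀ u v, v ≠ u → σU u v = σ0 u v) ∧
  (∀ u, VoteMax A u (σ0 u) (ρ u) (σU u u)) ∧
  ∀ hn : 0 < n,
    σhat ⟨0, hn⟩ = σU ⟨0, hn⟩ ⟨0, hn⟩ ∧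
    ∀ u, u ≠ ⟨0, hn⟩ →
      ∀ l : Fin k, consensusCount σU ⟨0, hn⟩ u l ≤
        consensusCount σU ⟨0, hn⟩ u (σhat u)

/-- Algorithm 1 with the standard data-driven penalties. -/
def AlgorithmOne {n k : ℕ} (A : Adj n) (σ0 σU : Fin n → Fin n → Fin k)
    (σhat : Fin n → Fin k) : Prop :=
  RefineSpec A σ0 σU
    (fun u => rhoStat n (hata A u (σ0 u)) (hatb A u (σ0 u))
      (tStat n (hata A u (σ0 u)) (hatb A u (σ0 u)))) σhat

/-- Algorithm 1 with the truncated `t_u` (truncation level `log (2/ε0)`). -/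
def AlgorithmOneTrunc (ε0 : ℝ) {n k : ℕ} (A : Adj n)
    (σ0 σU : Fin n → Fin n → Fin k) (σhat : Fin n → Fin k) : Prop :=
  RefineSpec A σ0 σU
    (fun u => rhoStat n (hata A u (σ0 u)) (hatb A u (σ0 u))
      (min (tStat n (hata A u (σ0 u)) (hatb A u (σ0 u)))
        (Real.log (2 / ε0)))) σhat

/-- Algorithm 1 with known `a` and `b`. -/
def AlgorithmOneKnown (a b : ℝ) {n k : ℕ} (A : Adj n)
    (σ0 σU : Fin n → Fin n → Fin k) (σhat : Fin n → Fin k) : Prop :=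
  RefineSpec A σ0 σU (fun _ => rhoStat n a b (tStat n a b)) σhat

/-- Algorithm 1 with known `a`, `b` and truncated `t_u`. -/
def AlgorithmOneKnownTrunc (a b ε0 : ℝ) {n k : ℕ} (A : Adj n)
    (σ0 σU : Fin n → Fin n → Fin k) (σhat : Fin n → Fin k) : Prop :=
  RefineSpec A σ0 σU
    (fun _ => rhoStat n a b (min (tStat n a b) (Real.log (2 / ε0)))) σhat

/-- The initializer `σ0 A u` (that is, `σ⁰ᵤ`) only uses the data `A₋ᵤ`. -/
def LocalInit {n k : ℕ} (σ0 : Adj n → Fin n → Fin n → Fin k) : Prop :=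
  ∀ (A A' : Adj n) (u : Fin n),
    (∀ v w, v ≠ u → w ≠ u → A v w = A' v w) → σ0 A u = σ0 A' u

/-- Condition 1: the initializer is, with probability at least
`1 − C0 n^{−(1+δ)}`, within misclassification proportion `γ` of the truth,
uniformly over the parameter space and the left-out node. -/
def Condition1 {n k : ℕ}
    (Θ : Set (Matrix (Fin k) (Fin k) ℝ × (Fin n → Fin k)))
    (σ0 : Adj n → Fin n → Fin n → Fin k) (C0 δ γ : ℝ) : Prop :=
  ∀ p ∈ Θ, ∀ u : Fin n,
    1 - C0 * (n : ℝ) ^ (-(1 + δ)) ≤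
      prob (pMat p.1 p.2) { A | misclass p.2 (σ0 A u) ≤ γ }

/-- Degree of a node. -/
def degree {n : ℕ} (A : Adj n) (u : Fin n) : ℝ := ∑ v, aVal A u v

/-- Average degree `d̄`. -/
def avgDeg {n : ℕ} (A : Adj n) : ℝ := (∑ u, degree A u) / n

/-- Trimming operator `T_τ`: zero out rows/columns of high-degree nodes. -/
def trim {n : ℕ} (A : Adj n) (τ : ℝ) : Matrix (Fin n) (Fin n) ℝ :=
  fun u v => if τ ≤ degree A u ∨ τ ≤ degree A v then 0 else aVal A u v

/-- Regularized adjacency matrix `A_τ = A + (τ/n)·11ᵀ`. -/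
def addReg {n : ℕ} (A : Adj n) (τ : ℝ) : Matrix (Fin n) (Fin n) ℝ :=
  fun u v => aVal A u v + τ / n

/-- Normalized Laplacian `L(M)_{uv} = M_{uv}/√(r_u r_v)`. -/
def lap {n : ℕ} (M : Matrix (Fin n) (Fin n) ℝ) : Matrix (Fin n) (Fin n) ℝ :=
  fun u v => M u v / Real.sqrt ((∑ w, M u w) * (∑ w, M v w))

/-- `U` is a matrix whose columns are orthonormal eigenvectors of `M`
corresponding to the `k` leading (largest in absolute value) eigenvalues. -/
def LeadingEigenvectors {n k : ℕ} (M : Matrix (Fin n) (Fin n) ℝ)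
    (U : Matrix (Fin n) (Fin k) ℝ) : Prop :=
  ∃ μ : Fin k → ℝ,
    (∀ i j : Fin k, (∑ u, U u i * U u j) = if i = j then (1 : ℝ) else 0) ∧
    (∀ j : Fin k, M.mulVec (fun u => U u j) = fun u => μ j * U u j) ∧
    ∀ (x : Fin n → ℝ) (c : ℝ), M.mulVec x = (fun u => c * x u) →
      (∀ j, (∑ u, x u * U u j) = 0) → x ≠ 0 → ∀ j, |c| ≤ |μ j|

/-- Distance between two rows of `U`. -/
def rowDist {n k : ℕ} (U : Matrix (Fin n) (Fin k) ℝ) (v w : Fin n) : ℝ :=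
  Real.sqrt (∑ j, (U v j - U w j) ^ 2)

/-- Number of points of `S` within distance `r` of `v`. -/
def ballCount {n k : ℕ} (U : Matrix (Fin n) (Fin k) ℝ) (r : ℝ)
    (S : Finset (Fin n)) (v : Fin n) : ℕ :=
  (S.filter fun w => rowDist U w v < r).card

/-- Specification of the greedy clustering scheme (Algorithm 2) with critical
radius `r`, applied to the rows of `U`. -/
def GreedyCluster {n k : ℕ} (U : Matrix (Fin n) (Fin k) ℝ) (r : ℝ)
    (σhat : Fin n → Fin k) : Prop :=
  ∃ (S : ℕ → Finset (Fin n)) (t : Fin k → Fin n) (Ch : Fin k → Finset (Fin n)),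
    S 0 = Finset.univ ∧
    (∀ i : Fin k,
      ((S i.val).Nonempty → t i ∈ S i.val ∧
        ∀ v ∈ S i.val,
          ballCount U r (S i.val) v ≤ ballCount U r (S i.val) (t i)) ∧
      Ch i = (S i.val).filter (fun v => rowDist U v (t i) < r) ∧
      S (i.val + 1) = S i.val \ Ch i) ∧
    (∀ i : Fin k, ∀ u ∈ Ch i, σhat u = i) ∧
    ∀ u ∈ S k, ∀ j : Fin k,
      (∑ v ∈ Ch (σhat u), rowDist U u v) / ((Ch (σhat u)).card : ℝ) ≤
        (∑ v ∈ Ch j, rowDist U u v) / ((Ch j).card : ℝ)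

/-- `σhat` is a possible output of `USC(τ)` (with tuning constant `μ`). -/
def USCOutput {n k : ℕ} (A : Adj n) (τ μ : ℝ) (σhat : Fin n → Fin k) : Prop :=
  ∃ U : Matrix (Fin n) (Fin k) ℝ,
    LeadingEigenvectors (trim A τ) U ∧
    GreedyCluster U (μ * Real.sqrt ((k : ℝ) / n)) σhat

/-- `σhat` is a possible output of `NSC(τ)` (with tuning constant `μ`). -/
def NSCOutput {n k : ℕ} (A : Adj n) (τ μ : ℝ) (σhat : Fin n → Fin k) : Prop :=
  ∃ U : Matrix (Fin n) (Fin k) ℝ,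
    LeadingEigenvectors (lap (addReg A τ)) U ∧
    GreedyCluster U (μ * Real.sqrt ((k : ℝ) / n)) σhat

/-- The initializer `σ0 A u` is obtained by applying `USC(Cτ · d̄)` to the
leave-one-out matrix `A₋ᵤ` (identified with a graph on `n − 1` nodes via an
injection `e` avoiding `u`). -/
def USCInitDeg {n k : ℕ} (Cτ μ : ℝ) (σ0 : Adj n → Fin n → Fin n → Fin k) :
    Prop :=
  ∀ (A : Adj n) (u : Fin n), ∃ (m : ℕ) (e : Fin m → Fin n) (s' : Fin m → Fin k),
    m + 1 = n ∧ Function.Injective e ∧ (∀ w, e w ≠ u) ∧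
    USCOutput (fun v w => A (e v) (e w))
      (Cτ * avgDeg (fun v w => A (e v) (e w))) μ s' ∧
    ∀ w, σ0 A u (e w) = s' w

/-- The initializer `σ0 A u` is obtained by applying `NSC(Cτ · d̄)` to `A₋ᵤ`. -/
def NSCInitDeg {n k : ℕ} (Cτ μ : ℝ) (σ0 : Adj n → Fin n → Fin n → Fin k) :
    Prop :=
  ∀ (A : Adj n) (u : Fin n), ∃ (m : ℕ) (e : Fin m → Fin n) (s' : Fin m → Fin k),
    m + 1 = n ∧ Function.Injective e ∧ (∀ w, e w ≠ u) ∧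
    NSCOutput (fun v w => A (e v) (e w))
      (Cτ * avgDeg (fun v w => A (e v) (e w))) μ s' ∧
    ∀ w, σ0 A u (e w) = s' w

/-- The initializer `σ0 A u` is obtained by applying `USC(τ)` (with a fixed
regularization level `τ`) to `A₋ᵤ`. -/
def USCInitTau {n k : ℕ} (τ μ : ℝ) (σ0 : Adj n → Fin n → Fin n → Fin k) :
    Prop :=
  ∀ (A : Adj n) (u : Fin n), ∃ (m : ℕ) (e : Fin m → Fin n) (s' : Fin m → Fin k),
    m + 1 = n ∧ Function.Injective e ∧ (∀ w, e w ≠ u) ∧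
    USCOutput (fun v w => A (e v) (e w)) τ μ s' ∧
    ∀ w, σ0 A u (e w) = s' w

/-- The initializer `σ0 A u` is obtained by applying `NSC(τ)` (with a fixed
regularization level `τ`) to `A₋ᵤ`. -/
def NSCInitTau {n k : ℕ} (τ μ : ℝ) (σ0 : Adj n → Fin n → Fin n → Fin k) :
    Prop :=
  ∀ (A : Adj n) (u : Fin n), ∃ (m : ℕ) (e : Fin m → Fin n) (s' : Fin m → Fin k),
    m + 1 = n ∧ Function.Injective e ∧ (∀ w, e w ≠ u) ∧
    NSCOutput (fun v w => A (e v) (e w)) τ μ s' ∧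
    ∀ w, σ0 A u (e w) = s' w

/-- The minimax-rate threshold `exp(−(1−coef)·n·I*/2)` for `k = 2` and
`exp(−(1−coef)·n·I*/(βk))` for `k ≥ 3`. -/
def rate (β : ℝ) (n k : ℕ) (a b coef : ℝ) : ℝ :=
  if k = 2 then Real.exp (-((1 - coef) * ((n : ℝ) * renyiHalf n a b)) / 2)
  else Real.exp (-((1 - coef) * ((n : ℝ) * renyiHalf n a b)) / (β * k))

/-- `sup_{(B,σ)∈Θ₀} P{ℓ(σ,σ̂) ≥ rate} → 0` as `n → ∞`. -/
def SupSmall0 (β : ℝ) (k : ℕ → ℕ) (a b coef : ℕ → ℝ)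
    (σhat : ∀ n, Adj n → Fin n → Fin (k n)) : Prop :=
  ∀ ε' : ℝ, 0 < ε' → ∀ᶠ n in atTop,
    ∀ p ∈ Theta0 n (k n) (a n) (b n) β,
      prob (pMat p.1 p.2)
        { A | rate β n (k n) (a n) (b n) (coef n) ≤ misclass (σhat n A) p.2 }
        ≤ ε'

/-- `sup_{(B,σ)∈Θ} P{ℓ(σ,σ̂) ≥ rate} → 0` as `n → ∞`. -/
def SupSmallGen (β α : ℝ) (k : ℕ → ℕ) (a b lam coef : ℕ → ℝ)
    (σhat : ∀ n, Adj n → Fin n → Fin (k n)) : Prop :=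
  ∀ ε' : ℝ, 0 < ε' → ∀ᶠ n in atTop,
    ∀ p ∈ ThetaGen n (k n) (a n) (b n) (lam n) β α,
      prob (pMat p.1 p.2)
        { A | rate β n (k n) (a n) (b n) (coef n) ≤ misclass (σhat n A) p.2 }
        ≤ ε'

/-- The running assumption `0 < b < a ≤ (1−ε) n`. -/
def Baseline (ε : ℝ) (n : ℕ) (a b : ℝ) : Prop :=
  0 < b ∧ b < a ∧ a ≤ (1 - ε) * n

/-- `a ≍ b`. -/
def Comparable (a b : ℕ → ℝ) : Prop :=
  ∃ c1 c2 : ℝ, 0 < c1 ∧ ∀ n, c1 * b n ≤ a n ∧ a n ≤ c2 * b n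

/-- The constant `C_ε`. -/
def Ceps (ε : ℝ) : ℝ := (10 / 3) * ((2 - ε) / ((ε / 2) * Real.log (2 / ε)))

/-- The constant `c_ε`. -/
def ceps (ε : ℝ) : ℝ := min (1 / (10 * Ceps ε)) (ε / (2 - ε))

/-- The maximal entry `p_max` of a matrix. -/
def pmax {n : ℕ} (P : Matrix (Fin n) (Fin n) ℝ) : ℝ :=
  sSup { x : ℝ | ∃ u v, x = P u v }

/-- The matrix agreeing with `M` on `J × J` and zero elsewhere. -/
def restrictM {n : ℕ} (M : Matrix (Fin n) (Fin n) ℝ) (J : Finset (Fin n)) :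
    Matrix (Fin n) (Fin n) ℝ :=
  fun u v => if u ∈ J ∧ v ∈ J then M u v else 0

/-- The real-valued adjacency matrix. -/
def adjMat {n : ℕ} (A : Adj n) : Matrix (Fin n) (Fin n) ℝ := fun u v => aVal A u v

end

end SBM

namespace SBM

open Filter

/-- The symmetric, zero-diagonal adjacency matrix with prescribed entries above the diagonal. -/
def adjOfUpper {n : ℕ} (g : {p : Fin n × Fin n // p.1 < p.2} → Bool) : Adj n := fun u v =>
  if h : u < v then g ⟨(u, v), h⟩ else if h : v < u then g ⟨(v, u), h⟩ else false

lemma prod_upper {n : ℕ} (F : Fin n → Fin n → ℝ) :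
    (∏ u, ∏ v, if u < v then F u v else 1) =
      ∏ p : {p : Fin n × Fin n // p.1 < p.2}, F p.1.1 p.1.2 := by
  rw [← Finset.prod_product', Finset.univ_product_univ, ← Finset.prod_filter]
  exact Finset.prod_subtype _ (by simp) (fun p : Fin n × Fin n => F p.1 p.2)

/-- Independence of the entries above the diagonal. -/
lemma sum_weight_mul_prod {n : ℕ} (P : Matrix (Fin n) (Fin n) ℝ)
    (f : Fin n → Fin n → Bool → ℝ) :
    ∑ A : Adj n, weight P A * ∏ u, ∏ v, (if u < v then f u v (A u v) else 1) =
      ∏ u, ∏ v, if u < v then P u v * f u v true + (1 - P u v) * f u v false else 1 := by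
  classical
  have hsum : ∀ p : {p : Fin n × Fin n // p.1 < p.2},
      P p.1.1 p.1.2 * f p.1.1 p.1.2 true + (1 - P p.1.1 p.1.2) * f p.1.1 p.1.2 false =
        ∑ b : Bool, (if b then P p.1.1 p.1.2 else 1 - P p.1.1 p.1.2) * f p.1.1 p.1.2 b := by
    intro p; simp
  rw [prod_upper, Finset.prod_congr rfl (fun p _ => hsum p), Finset.prod_univ_sum]
  simp only [weight, ite_mul, zero_mul]
  rw [← Finset.sum_filter]
  refine Finset.sum_bij' (fun A _ p => A p.1.1 p.1.2) (fun g _ => adjOfUpper g) ?_ ?_ ?_ ?_ ?_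
  · intro A _
    simp
  · intro g _
    simp only [Finset.mem_filter, Finset.mem_univ, true_and]
    constructor
    · intro u; simp [adjOfUpper]
    · intro u v
      rcases lt_trichotomy u v with h | h | h
      · simp [adjOfUpper, h, not_lt_of_gt h]
      · subst h; rfl
      · simp [adjOfUpper, h, not_lt_of_gt h]
  · intro A hA
    simp only [Finset.mem_filter, Finset.mem_univ, true_and] at hA
    funext u v
    rcases lt_trichotomy u v with h | h | h
    · simp [adjOfUpper, h]
    · subst h; simp [adjOfUpper, hA.1]
    · simp [adjOfUpper, h, not_lt_of_gt h, hA.2 u v]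
  · intro g _
    funext p
    have := p.2
    simp [adjOfUpper, this]
  · intro A _
    rw [prod_upper (fun u v => if A u v then P u v else 1 - P u v),
      prod_upper (fun u v => f u v (A u v)), ← Finset.prod_mul_distrib]
    refine Finset.prod_congr rfl fun p _ => ?_
    dsimp only
    split_ifs <;> rfl

lemma weight_nonneg {n : ℕ} {P : Matrix (Fin n) (Fin n) ℝ}
    (hP : ∀ u v, 0 ≤ P u v ∧ P u v ≤ 1) (A : Adj n) : 0 ≤ weight P A := by
  unfold weight
  split_ifs
  · refine Finset.prod_nonneg fun u _ => Finset.prod_nonneg fun v _ => ?_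
    have := hP u v
    split_ifs <;> linarith
  · exact le_rfl

lemma sum_weight {n : ℕ} (P : Matrix (Fin n) (Fin n) ℝ) : ∑ A : Adj n, weight P A = 1 := by
  simpa using sum_weight_mul_prod P (fun _ _ _ => 1)

/-- The off-diagonal part of the centered adjacency matrix. -/
noncomputable def centered {n : ℕ} (P : Matrix (Fin n) (Fin n) ℝ) (A : Adj n) :
    Matrix (Fin n) (Fin n) ℝ :=
  fun u v => if u = v then 0 else aVal A u v - P u v

lemma exp_sub_one_sub_le (b : ℝ) : Real.exp b - 1 - b ≤ b ^ 2 * Real.exp |b| := by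
  have h1 : Real.exp b - 1 ≤ b * Real.exp b := by
    have h := Real.add_one_le_exp (-b)
    have := mul_le_mul_of_nonneg_right h (Real.exp_pos b).le
    rw [← Real.exp_add] at this
    simp at this
    linarith
  rcases le_total 0 b with hb | hb
  · rw [abs_of_nonneg hb]
    nlinarith
  · rw [abs_of_nonpos hb]
    have h2 := Real.add_one_le_exp b
    have h3 : 1 ≤ Real.exp (-b) := Real.one_le_exp (by linarith)
    have h4 : Real.exp b ≤ 1 := Real.exp_le_one_iff.2 hb
    nlinarith [sq_nonneg b]

lemma bernoulli_mgf_le {p b β : ℝ} (hp0 : 0 ≤ p) (hb : |b| ≤ β) :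
    p * Real.exp (b * (1 - p)) + (1 - p) * Real.exp (b * (0 - p)) ≤
      Real.exp (p * (b ^ 2 * Real.exp β)) := by
  have e : p * Real.exp (b * (1 - p)) + (1 - p) * Real.exp (b * (0 - p)) =
      (p * (Real.exp b - 1) + 1) * Real.exp (-(b * p)) := by
    have : b * (1 - p) = b + -(b * p) := by ring
    rw [this, Real.exp_add]
    have : b * (0 - p) = -(b * p) := by ring
    rw [this]; ring
  rw [e]
  calc _ ≤ Real.exp (p * (Real.exp b - 1)) * Real.exp (-(b * p)) :=
        mul_le_mul_of_nonneg_right (Real.add_one_le_exp _) (Real.exp_pos _).le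
    _ = Real.exp (p * (Real.exp b - 1 - b)) := by rw [← Real.exp_add]; ring_nf
    _ ≤ _ := by
        apply Real.exp_le_exp.2
        apply mul_le_mul_of_nonneg_left _ hp0
        exact (exp_sub_one_sub_le b).trans
          (mul_le_mul_of_nonneg_left (Real.exp_le_exp.2 hb) (sq_nonneg b))

lemma sum_upper {n : ℕ} (F : Fin n → Fin n → ℝ) (hF : ∀ u, F u u = 0) :
    ∑ u, ∑ v, F u v = ∑ u, ∑ v, if u < v then F u v + F v u else 0 := by
  have h1 : ∀ u v, F u v = (if u < v then F u v else 0) + (if v < u then F u v else 0) := by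
    intro u v
    rcases lt_trichotomy u v with h | h | h
    · simp [h, not_lt_of_gt h]
    · subst h; simp [hF]
    · simp [h, not_lt_of_gt h]
  calc ∑ u, ∑ v, F u v
      = ∑ u, ∑ v, (if u < v then F u v else 0) + ∑ u, ∑ v, (if v < u then F u v else 0) := by
        simp only [← Finset.sum_add_distrib]
        exact Finset.sum_congr rfl fun u _ => Finset.sum_congr rfl fun v _ => h1 u v
    _ = ∑ u, ∑ v, (if u < v then F u v else 0) + ∑ u, ∑ v, (if u < v then F v u else 0) := by
        congr 1
        exact Finset.sum_comm
    _ = _ := by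
        simp only [← Finset.sum_add_distrib]
        refine Finset.sum_congr rfl fun u _ => Finset.sum_congr rfl fun v _ => ?_
        split_ifs <;> simp

/-- Moment generating function of a linear form in the centered adjacency matrix. -/
lemma sum_weight_mul_exp_le {n : ℕ} {P : Matrix (Fin n) (Fin n) ℝ} {q θ : ℝ}
    (hsym : ∀ u v, P u v = P v u) (hP : ∀ u v, 0 ≤ P u v ∧ P u v ≤ 1)
    (hq : ∀ u v, P u v ≤ q) (hθ : 0 ≤ θ) (c : Fin n → Fin n → ℝ) (hc : ∀ u v, |c u v| ≤ 1) :
    ∑ A : Adj n, weight P A * Real.exp (θ * ∑ u, ∑ v, c u v * centered P A u v) ≤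
      Real.exp (2 * θ ^ 2 * Real.exp (2 * θ) * q * ∑ u, ∑ v, |c u v|) := by
  have hmain : ∀ A : Adj n,
      weight P A * Real.exp (θ * ∑ u, ∑ v, c u v * centered P A u v) =
      weight P A * ∏ u, ∏ v, (if u < v then
        (fun b : Bool => Real.exp (θ * (c u v + c v u) * ((if b then 1 else 0) - P u v)))
          (A u v) else 1) := by
    intro A
    by_cases hA : (∀ u, A u u = false) ∧ (∀ u v, A u v = A v u)
    · congr 1
      rw [sum_upper _ (by intro u; simp [centered]), Finset.mul_sum, Real.exp_sum]
      refine Finset.prod_congr rfl fun u _ => ?_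
      rw [Finset.mul_sum, Real.exp_sum]
      refine Finset.prod_congr rfl fun v _ => ?_
      split_ifs with h
      · simp only [centered, h.ne, h.ne', if_false, aVal, hA.2 v u, hsym v u]
        ring_nf
      · simp
    · simp [weight, hA]
  rw [Finset.sum_congr rfl fun A _ => hmain A,
    sum_weight_mul_prod P
      (fun u v b => Real.exp (θ * (c u v + c v u) * ((if b then 1 else 0) - P u v)))]
  have hle : ∀ u v, (if u < v then P u v * Real.exp (θ * (c u v + c v u) *
        ((if (true : Bool) then 1 else 0) - P u v)) + (1 - P u v) *
        Real.exp (θ * (c u v + c v u) * ((if (false : Bool) then 1 else 0) - P u v)) else 1) ≤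
      Real.exp (2 * θ ^ 2 * Real.exp (2 * θ) * q *
        (if u < v then (|c u v| + |c v u|) else 0)) := by
    intro u v
    by_cases h : u < v
    · simp only [if_pos h, if_true, Bool.false_eq_true, if_false]
      have hb : |θ * (c u v + c v u)| ≤ 2 * θ := by
        rw [abs_mul, abs_of_nonneg hθ]
        have := abs_add_le (c u v) (c v u)
        nlinarith [hc u v, hc v u]
      refine (bernoulli_mgf_le (hP u v).1 hb).trans ?_
      apply Real.exp_le_exp.2
      have h1 : (c u v + c v u) ^ 2 ≤ 2 * (|c u v| + |c v u|) := by
        have h2 := abs_add_le (c u v) (c v u)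
        rw [← sq_abs]
        nlinarith [hc u v, hc v u, abs_nonneg (c u v + c v u)]
      have h0 : 0 ≤ |c u v| + |c v u| := by positivity
      calc P u v * ((θ * (c u v + c v u)) ^ 2 * Real.exp (2 * θ))
          = (θ ^ 2 * Real.exp (2 * θ)) * (P u v * (c u v + c v u) ^ 2) := by ring
        _ ≤ (θ ^ 2 * Real.exp (2 * θ)) * (q * (2 * (|c u v| + |c v u|))) := by
            apply mul_le_mul_of_nonneg_left _ (by positivity)
            exact mul_le_mul (hq u v) h1 (sq_nonneg _) ((hP u v).1.trans (hq u v))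
        _ = _ := by ring
    · simp [h]
  calc _ ≤ ∏ u, ∏ v, Real.exp (2 * θ ^ 2 * Real.exp (2 * θ) * q *
        (if u < v then (|c u v| + |c v u|) else 0)) := by
        have h0 : ∀ u v, 0 ≤ (if u < v then P u v * Real.exp (θ * (c u v + c v u) *
            ((if (true : Bool) then 1 else 0) - P u v)) + (1 - P u v) *
            Real.exp (θ * (c u v + c v u) * ((if (false : Bool) then 1 else 0) - P u v))
            else 1) := by
          intro u v
          have h1 := (hP u v).1
          have h2 : 0 ≤ 1 - P u v := by linarith [(hP u v).2]
          split_ifs <;> positivity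
        exact Finset.prod_le_prod (fun u _ => Finset.prod_nonneg fun v _ => h0 u v)
          fun u _ => Finset.prod_le_prod (fun v _ => h0 u v) fun v _ => hle u v
    _ = Real.exp (2 * θ ^ 2 * Real.exp (2 * θ) * q *
        ∑ u, ∑ v, (if u < v then (|c u v| + |c v u|) else 0)) := by
        simp only [Finset.mul_sum, Real.exp_sum]
    _ ≤ _ := by
        apply Real.exp_le_exp.2
        by_cases hn : Nonempty (Fin n)
        · obtain ⟨u⟩ := hn
          have hq0 : 0 ≤ q := (hP u u).1.trans (hq u u)
          apply mul_le_mul_of_nonneg_left _ (by positivity)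
          have := sum_upper (fun u v => if u = v then 0 else |c u v|) (by simp)
          calc _ = ∑ u, ∑ v, (if u = v then 0 else |c u v|) := by
                rw [this]
                refine Finset.sum_congr rfl fun u _ => Finset.sum_congr rfl fun v _ => ?_
                by_cases h : u < v
                · simp [h, h.ne, h.ne']
                · simp [h]
            _ ≤ _ := by
                refine Finset.sum_le_sum fun u _ => Finset.sum_le_sum fun v _ => ?_
                split_ifs <;> simp
        · have := not_nonempty_iff.1 hn
          simp

lemma prob_mono {n : ℕ} {P : Matrix (Fin n) (Fin n) ℝ}
    (hP : ∀ u v, 0 ≤ P u v ∧ P u v ≤ 1) {S T : Set (Adj n)} (h : S ⊆ T) :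
    prob P S ≤ prob P T :=
  Finset.sum_le_sum fun A _ =>
    Set.indicator_le_indicator_of_subset h (fun A => weight_nonneg hP A) A

lemma prob_union_le {n : ℕ} {P : Matrix (Fin n) (Fin n) ℝ}
    (hP : ∀ u v, 0 ≤ P u v ∧ P u v ≤ 1) (S T : Set (Adj n)) :
    prob P (S ∪ T) ≤ prob P S + prob P T := by
  unfold prob
  rw [← Finset.sum_add_distrib]
  refine Finset.sum_le_sum fun A _ => ?_
  have := weight_nonneg hP A
  by_cases h1 : A ∈ S <;> by_cases h2 : A ∈ T <;> simp [h1, h2, this]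

lemma prob_exists_le {n : ℕ} {P : Matrix (Fin n) (Fin n) ℝ}
    (hP : ∀ u v, 0 ≤ P u v ∧ P u v ≤ 1) {ι : Type*} (s : Finset ι) (Q : ι → Adj n → Prop) :
    prob P {A | ∃ i ∈ s, Q i A} ≤ ∑ i ∈ s, prob P {A | Q i A} := by
  classical
  induction s using Finset.induction_on with
  | empty => simp [prob]
  | insert a s ha ih =>
    rw [Finset.sum_insert ha]
    have : {A : Adj n | ∃ i ∈ insert a s, Q i A} = {A | Q a A} ∪ {A | ∃ i ∈ s, Q i A} := by
      ext A; simp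
    rw [this]
    exact (prob_union_le hP _ _).trans (by linarith)

lemma prob_le_exp {n : ℕ} {P : Matrix (Fin n) (Fin n) ℝ} {q θ : ℝ}
    (hsym : ∀ u v, P u v = P v u) (hP : ∀ u v, 0 ≤ P u v ∧ P u v ≤ 1)
    (hq : ∀ u v, P u v ≤ q) (hθ : 0 ≤ θ) (c : Fin n → Fin n → ℝ) (hc : ∀ u v, |c u v| ≤ 1)
    (lam : ℝ) :
    prob P {A | lam ≤ ∑ u, ∑ v, c u v * centered P A u v} ≤
      Real.exp (-(θ * lam) + 2 * θ ^ 2 * Real.exp (2 * θ) * q * ∑ u, ∑ v, |c u v|) := by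
  rw [Real.exp_add]
  refine le_trans ?_ (mul_le_mul_of_nonneg_left
    (sum_weight_mul_exp_le hsym hP hq hθ c hc) (Real.exp_pos _).le)
  rw [Finset.mul_sum]
  refine Finset.sum_le_sum fun A _ => ?_
  have hw := weight_nonneg hP A
  rw [mul_left_comm, ← Real.exp_add]
  by_cases h : lam ≤ ∑ u, ∑ v, c u v * centered P A u v
  · rw [Set.indicator_of_mem (by exact h)]
    refine le_mul_of_one_le_right hw (Real.one_le_exp ?_)
    nlinarith [mul_le_mul_of_nonneg_left h hθ]
  · rw [Set.indicator_of_notMem (by exact h)]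
    positivity

/-- Chernoff bound for the sum of the centered adjacency matrix over a rectangle. -/
lemma prob_rectangle_le {n : ℕ} {P : Matrix (Fin n) (Fin n) ℝ} {q θ : ℝ}
    (hsym : ∀ u v, P u v = P v u) (hP : ∀ u v, 0 ≤ P u v ∧ P u v ≤ 1)
    (hq : ∀ u v, P u v ≤ q) (hθ : 0 ≤ θ) (S T : Finset (Fin n)) (lam : ℝ) :
    prob P {A | lam ≤ |∑ u ∈ S, ∑ v ∈ T, centered P A u v|} ≤
      2 * Real.exp (-(θ * lam) +
        2 * θ ^ 2 * Real.exp (2 * θ) * (q * (S.card * T.card))) := by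
  classical
  have key : ∀ σ : ℝ, |σ| = 1 →
      prob P {A | lam ≤ σ * ∑ u ∈ S, ∑ v ∈ T, centered P A u v} ≤
      Real.exp (-(θ * lam) + 2 * θ ^ 2 * Real.exp (2 * θ) * (q * (S.card * T.card))) := by
    intro σ hσ
    have h := prob_le_exp hsym hP hq hθ (fun u v => if u ∈ S ∧ v ∈ T then σ else 0)
      (by intro u v; split_ifs <;> simp [hσ]) lam
    have e1 : ∀ A, ∑ u, ∑ v, (if u ∈ S ∧ v ∈ T then σ else 0) * centered P A u v =
        σ * ∑ u ∈ S, ∑ v ∈ T, centered P A u v := by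
      intro A
      simp only [ite_and, ite_mul, zero_mul, Finset.mul_sum, Finset.sum_ite_irrel,
        Finset.sum_const_zero, Finset.sum_ite_mem, Finset.univ_inter]
    have e2 : ∑ u, ∑ v, |if u ∈ S ∧ v ∈ T then σ else 0| = (S.card : ℝ) * T.card := by
      simp only [ite_and, apply_ite abs, hσ, abs_zero, Finset.sum_ite_irrel,
        Finset.sum_const_zero, Finset.sum_ite_mem, Finset.univ_inter]
      simp
    simp only [e1, e2] at h
    rwa [mul_assoc (2 * θ ^ 2 * Real.exp (2 * θ)) q] at h
  have hsub : {A | lam ≤ |∑ u ∈ S, ∑ v ∈ T, centered P A u v|} ⊆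
      {A | lam ≤ 1 * ∑ u ∈ S, ∑ v ∈ T, centered P A u v} ∪
      {A | lam ≤ (-1) * ∑ u ∈ S, ∑ v ∈ T, centered P A u v} := by
    intro A hA
    simp only [Set.mem_ofPred_eq, Set.mem_union, one_mul, neg_mul] at hA ⊢
    exact le_abs.1 hA
  have := (prob_mono hP hsub).trans (prob_union_le hP _ _)
  linarith [key 1 (by simp), key (-1) (by simp)]

/-- Upper bound `s log (e n / s)` for the logarithm of the number of `s`-subsets of an `n`-set. -/
noncomputable def subsetEntropy (n s : ℕ) : ℝ := s * (1 + Real.log (n / s))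

lemma choose_le_exp_subsetEntropy {n s : ℕ} (hs : 0 < s) (hsn : s ≤ n) :
    (n.choose s : ℝ) ≤ Real.exp (subsetEntropy n s) := by
  have hs' : (0 : ℝ) < s := by exact_mod_cast hs
  have hn' : (0 : ℝ) < n := by exact_mod_cast hs.trans_le hsn
  have h1 : (n.choose s : ℝ) ≤ (n : ℝ) ^ s / (s.factorial : ℝ) := Nat.choose_le_pow_div s n
  have h2 := Real.pow_div_factorial_le_exp (s : ℝ) hs'.le s
  have h3 : Real.exp (subsetEntropy n s) = Real.exp s * ((n : ℝ) / s) ^ s := by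
    rw [subsetEntropy, mul_add, mul_one, Real.exp_add, Real.exp_nat_mul,
      Real.exp_log (by positivity)]
  rw [h3]
  calc _ ≤ (n : ℝ) ^ s / (s.factorial : ℝ) := h1
    _ = ((s : ℝ) ^ s / (s.factorial : ℝ)) * ((n : ℝ) / s) ^ s := by
        rw [div_pow]; field_simp
    _ ≤ _ := mul_le_mul_of_nonneg_right h2 (by positivity)

lemma subsetEntropy_mono {n s t : ℕ} (hs : 0 < s) (hst : s ≤ t) (htn : t ≤ n) :
    subsetEntropy n s ≤ subsetEntropy n t := by
  have hs' : (0 : ℝ) < s := by exact_mod_cast hs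
  have hst' : (s : ℝ) ≤ t := by exact_mod_cast hst
  have ht' : (0 : ℝ) < t := hs'.trans_le hst'
  have htn' : (t : ℝ) ≤ n := by exact_mod_cast htn
  have hn' : (0 : ℝ) < n := ht'.trans_le htn'
  unfold subsetEntropy
  rw [Real.log_div hn'.ne' hs'.ne', Real.log_div hn'.ne' ht'.ne']
  have h1 : Real.log t - Real.log s ≤ t / s - 1 := by
    rw [← Real.log_div ht'.ne' hs'.ne']
    exact Real.log_le_sub_one_of_pos (by positivity)
  have h2 : s * (Real.log t - Real.log s) ≤ t - s := by
    have := mul_le_mul_of_nonneg_left h1 hs'.le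
    have e : (s : ℝ) * (t / s - 1) = t - s := by field_simp
    linarith
  have h3 : Real.log t ≤ Real.log n := Real.log_le_log ht' htn'
  nlinarith

lemma sum_exp_neg_subsetEntropy_le {n : ℕ} {c : ℝ} (hc : 1 ≤ c) :
    ∑ S : Finset (Fin n) with S.Nonempty, Real.exp (-(c * subsetEntropy n S.card)) ≤
      n * Real.exp (-((c - 1) * (1 + Real.log n))) := by
  let f : ℕ → ℝ := fun s => if s = 0 then 0 else Real.exp (-(c * subsetEntropy n s))
  have h1 : ∑ S : Finset (Fin n) with S.Nonempty, Real.exp (-(c * subsetEntropy n S.card)) =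
      ∑ S ∈ (Finset.univ : Finset (Fin n)).powerset, f S.card := by
    rw [Finset.sum_filter, Finset.powerset_univ]
    refine Finset.sum_congr rfl fun S _ => ?_
    by_cases h : S = ∅
    · simp [h, f]
    · have := Finset.nonempty_iff_ne_empty.2 h
      simp [f, h, this]
  rw [h1, Finset.sum_powerset_apply_card, Finset.card_univ, Fintype.card_fin,
    Finset.sum_range_succ']
  simp only [f, if_true, smul_zero, add_zero]
  calc _ ≤ ∑ _k ∈ Finset.range n, Real.exp (-((c - 1) * (1 + Real.log n))) := by
        refine Finset.sum_le_sum fun k hk => ?_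
        have hk' : k + 1 ≤ n := Finset.mem_range.1 hk
        rw [if_neg (Nat.succ_ne_zero k), nsmul_eq_mul]
        have h2 := choose_le_exp_subsetEntropy (Nat.succ_pos k) hk'
        have h3 := subsetEntropy_mono one_pos (Nat.succ_le_succ (Nat.zero_le k)) hk'
        have h4 : subsetEntropy n 1 = 1 + Real.log n := by simp [subsetEntropy]
        calc _ ≤ Real.exp (subsetEntropy n (k + 1)) *
              Real.exp (-(c * subsetEntropy n (k + 1))) :=
              mul_le_mul_of_nonneg_right h2 (Real.exp_pos _).le
          _ ≤ _ := by
              rw [← Real.exp_add]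
              apply Real.exp_le_exp.2
              have h5 := mul_le_mul_of_nonneg_left (h4 ▸ h3) (sub_nonneg.2 hc)
              simp only [Nat.succ_eq_add_one] at h5
              linarith
    _ = _ := by simp

lemma exists_chernoff_param {n m s t d C : ℝ} (hm : 0 < m) (hmn : m ≤ n) (hs : 0 < s)
    (ht : 0 < t) (hd : 0 < d) (hC : 1 ≤ C) :
    ∃ θ : ℝ, 0 ≤ θ ∧
      -(θ * (16 * C * (√(d * s * t) * √√(m / n) + m))) +
        2 * θ ^ 2 * Real.exp (2 * θ) * (d / n * (s * t)) ≤
      -(C * (m * (1 + Real.log (n / m)))) := by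
  have hn : 0 < n := hm.trans_le hmn
  set l := 1 + Real.log (n / m) with hl
  have hl1 : 1 ≤ l := by
    have := Real.log_nonneg ((one_le_div hm).2 hmn)
    linarith
  set E := Real.exp (l / 4) with hE
  have hE0 : 0 < E := Real.exp_pos _
  have hE4 : E ^ 4 * m = Real.exp 1 * n := by
    have : E ^ 4 = Real.exp 1 * (n / m) := by
      rw [hE, ← Real.exp_nat_mul, hl]
      have : ((4 : ℕ) : ℝ) * ((1 + Real.log (n / m)) / 4) = 1 + Real.log (n / m) := by
        push_cast; ring
      rw [this, Real.exp_add, Real.exp_log (by positivity)]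
    rw [this]; field_simp
  have hlE : l ≤ 4 * E := by
    have := Real.add_one_le_exp (l / 4)
    rw [← hE] at this
    linarith
  have hroot : E⁻¹ ≤ √√(m / n) := by
    apply Real.le_sqrt_of_sq_le
    apply Real.le_sqrt_of_sq_le
    rw [← pow_mul, inv_pow, inv_eq_one_div, div_le_div_iff₀ (by positivity) hn]
    norm_num
    have := Real.add_one_le_exp (1 : ℝ)
    nlinarith
  set μ := d / n * (s * t) with hμ
  have hμ0 : 0 < μ := by positivity
  set lam := 16 * C * (√(d * s * t) * √√(m / n) + m) with hlam
  have hlam1 : 16 * C * m ≤ lam := by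
    rw [hlam]
    have : 0 ≤ √(d * s * t) * √√(m / n) := by positivity
    nlinarith
  have hlam2 : 16 * C * (√(d * s * t) * E⁻¹) ≤ lam := by
    rw [hlam]
    have : √(d * s * t) * E⁻¹ ≤ √(d * s * t) * √√(m / n) :=
      mul_le_mul_of_nonneg_left hroot (Real.sqrt_nonneg _)
    nlinarith
  have hlam0 : 0 < lam := lt_of_lt_of_le (by positivity) hlam1
  have hcommon : ∀ θ, 0 ≤ θ → θ ≤ l / 8 → 4 * θ * E * μ ≤ lam →
      C * (m * l) ≤ θ * lam / 2 →
      -(θ * lam) + 2 * θ ^ 2 * Real.exp (2 * θ) * μ ≤ -(C * (m * l)) := by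
    intro θ h0 h1 h2 h3
    have h4 : Real.exp (2 * θ) ≤ E := Real.exp_le_exp.2 (by linarith)
    have h5 : 2 * θ ^ 2 * Real.exp (2 * θ) * μ ≤ 2 * θ ^ 2 * E * μ := by gcongr
    have h6 := mul_le_mul_of_nonneg_left h2 h0
    nlinarith
  by_cases hcase : 4 * (l / 8) * E * μ ≤ lam
  · refine ⟨l / 8, by positivity, hcommon _ (by positivity) le_rfl hcase ?_⟩
    nlinarith
  · push Not at hcase
    have hle : lam / (4 * E * μ) ≤ l / 8 := by
      rw [div_le_iff₀ (by positivity)]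
      linarith
    refine ⟨lam / (4 * E * μ), by positivity, hcommon _ (by positivity) hle ?_ ?_⟩
    · apply le_of_eq; field_simp
    · have h1 : (16 * C) ^ 2 * (d * s * t) ≤ lam ^ 2 * E ^ 2 := by
        have h := pow_le_pow_left₀ (by positivity) hlam2 2
        have e : (16 * C * (√(d * s * t) * E⁻¹)) ^ 2 * E ^ 2 =
            (16 * C) ^ 2 * (d * s * t) := by
          rw [mul_pow, mul_pow (√_), Real.sq_sqrt (by positivity)]
          field_simp
        rw [← e]
        exact mul_le_mul_of_nonneg_right h (by positivity)
      have h2 : d * s * t = n * μ := by rw [hμ]; field_simp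
      rw [h2] at h1
      have e2 : lam / (4 * E * μ) * lam / 2 = lam ^ 2 * E ^ 2 / (8 * E ^ 3 * μ) := by
        field_simp; norm_num
      rw [e2, le_div_iff₀ (by positivity)]
      refine le_trans ?_ h1
      have h3 : C * (m * l) * (8 * E ^ 3 * μ) ≤ 32 * C * (E ^ 4 * m) * μ := by
        have : C * (m * l) * (8 * E ^ 3 * μ) = (8 * C * m * E ^ 3 * μ) * l := by ring
        rw [this]
        calc _ ≤ (8 * C * m * E ^ 3 * μ) * (4 * E) :=
              mul_le_mul_of_nonneg_left hlE (by positivity)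
          _ = _ := by ring
      rw [hE4] at h3
      refine h3.trans ?_
      have h4 : Real.exp 1 ≤ 3 := by linarith [Real.exp_one_lt_d9]
      have h5 : 0 < n * μ := by positivity
      have h6 : 32 * C * Real.exp 1 ≤ (16 * C) ^ 2 := by nlinarith
      calc _ = 32 * C * Real.exp 1 * (n * μ) := by ring
        _ ≤ (16 * C) ^ 2 * (n * μ) := mul_le_mul_of_nonneg_right h6 h5.le

/-- Discrepancy allowed between two vertex sets of sizes `s` and `t`. -/
noncomputable def discBound (n : ℕ) (d K s t : ℝ) : ℝ :=
  K * (√(d * s * t) * (√√(s / n) + √√(t / n)) + (s + t))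

lemma prob_disc_le {n : ℕ} {P : Matrix (Fin n) (Fin n) ℝ} {d C : ℝ}
    (hsym : ∀ u v, P u v = P v u) (hP : ∀ u v, 0 ≤ P u v ∧ P u v ≤ 1)
    (hd : 0 < d) (hq : ∀ u v, P u v ≤ d / n) (hC : 1 ≤ C) {S T : Finset (Fin n)}
    (hS : S.Nonempty) (hT : T.Nonempty) :
    prob P {A | discBound n d (16 * (2 * C)) S.card T.card ≤
        |∑ u ∈ S, ∑ v ∈ T, centered P A u v|} ≤
      2 * (Real.exp (-(C * subsetEntropy n S.card)) *
        Real.exp (-(C * subsetEntropy n T.card))) := by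
  have hs : (0 : ℝ) < S.card := by exact_mod_cast hS.card_pos
  have ht : (0 : ℝ) < T.card := by exact_mod_cast hT.card_pos
  have hSn : S.card ≤ n := by simpa using S.card_le_univ
  have hTn : T.card ≤ n := by simpa using T.card_le_univ
  have key : ∀ m : ℕ, 0 < m → m ≤ n → S.card ≤ m → T.card ≤ m →
      16 * (2 * C) * (√(d * S.card * T.card) * √√((m : ℝ) / n) + m) ≤
        discBound n d (16 * (2 * C)) S.card T.card →
      prob P {A | discBound n d (16 * (2 * C)) S.card T.card ≤
        |∑ u ∈ S, ∑ v ∈ T, centered P A u v|} ≤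
      2 * (Real.exp (-(C * subsetEntropy n S.card)) *
        Real.exp (-(C * subsetEntropy n T.card))) := by
    intro m hm hmn hSm hTm hle
    obtain ⟨θ, hθ, h⟩ := exists_chernoff_param (n := n) (m := m) (C := 2 * C)
      (by exact_mod_cast hm) (by exact_mod_cast hmn) hs ht hd (by linarith)
    refine (prob_rectangle_le hsym hP hq hθ S T _).trans ?_
    rw [← Real.exp_add]
    have h1 := subsetEntropy_mono hS.card_pos hSm hmn
    have h2 := subsetEntropy_mono hT.card_pos hTm hmn
    have h3 := mul_le_mul_of_nonneg_left hle hθ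
    apply mul_le_mul_of_nonneg_left _ (by norm_num)
    apply Real.exp_le_exp.2
    unfold subsetEntropy at *
    nlinarith
  rcases le_total S.card T.card with hST | hST
  · refine key T.card hT.card_pos hTn hST le_rfl ?_
    unfold discBound
    gcongr
    · exact le_add_of_nonneg_left (Real.sqrt_nonneg _)
    · linarith
  · refine key S.card hS.card_pos hSn le_rfl hST ?_
    unfold discBound
    gcongr
    · exact le_add_of_nonneg_right (Real.sqrt_nonneg _)
    · linarith

lemma prob_degree_le {n : ℕ} {P : Matrix (Fin n) (Fin n) ℝ} {d C : ℝ}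
    (hsym : ∀ u v, P u v = P v u) (hP : ∀ u v, 0 ≤ P u v ∧ P u v ≤ 1)
    (hd : Real.exp 1 ≤ d) (hq : ∀ u v, P u v ≤ d / n) (hC : 0 ≤ C) {S : Finset (Fin n)}
    (hS : n / (2 * d) < S.card) :
    prob P {A | S.card * ((16 + 3 * C) * √(d * Real.log d)) ≤
        |∑ u ∈ S, ∑ v, centered P A u v|} ≤
      2 * Real.exp (-(C * subsetEntropy n S.card)) := by
  have hd0 : 0 < d := (Real.exp_pos 1).trans_le hd
  have hs : (0 : ℝ) < S.card := lt_of_le_of_lt (by positivity) hS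
  have hn : (0 : ℝ) < n := by
    have : S.card ≤ n := by simpa using S.card_le_univ
    exact hs.trans_le (by exact_mod_cast this)
  have hlog : 1 ≤ Real.log d := (Real.le_log_iff_exp_le hd0).2 hd
  have hlogd : Real.log d ≤ d := (Real.log_le_sub_one_of_pos hd0).trans (by linarith)
  set θ := √(Real.log d / d) with hθ
  have hθ1 : θ ≤ 1 := Real.sqrt_le_one.2 ((div_le_one hd0).2 hlogd)
  have hθ2 : θ ^ 2 * d = Real.log d := by
    rw [hθ, Real.sq_sqrt (by positivity)]; field_simp
  have hθ3 : θ * √(d * Real.log d) = Real.log d := by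
    rw [hθ, ← Real.sqrt_mul (by positivity)]
    have : Real.log d / d * (d * Real.log d) = Real.log d ^ 2 := by field_simp
    rw [this, Real.sqrt_sq (by linarith)]
  refine (prob_rectangle_le hsym hP hq (θ := θ) (by positivity) S Finset.univ _).trans ?_
  apply mul_le_mul_of_nonneg_left _ (by norm_num)
  apply Real.exp_le_exp.2
  rw [Finset.card_univ, Fintype.card_fin]
  have e1 : d / n * ((S.card : ℝ) * n) = d * S.card := by field_simp
  have e2 : θ * (S.card * ((16 + 3 * C) * √(d * Real.log d))) =
      S.card * (16 + 3 * C) * Real.log d := by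
    linear_combination (S.card * (16 + 3 * C)) * hθ3
  have e3 : 2 * θ ^ 2 * Real.exp (2 * θ) * (d * S.card) =
      2 * Real.exp (2 * θ) * (S.card * Real.log d) := by
    linear_combination (2 * Real.exp (2 * θ) * S.card) * hθ2
  have h1 : Real.exp (2 * θ) ≤ 8 := by
    calc Real.exp (2 * θ) ≤ Real.exp 1 * Real.exp 1 := by
          rw [← Real.exp_add]; exact Real.exp_le_exp.2 (by linarith)
      _ ≤ 8 := by nlinarith [Real.exp_one_lt_d9, Real.exp_pos 1]
  have h2 : 1 + Real.log (n / S.card) ≤ 3 * Real.log d := by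
    have : (n : ℝ) / S.card ≤ 2 * d := by
      rw [div_lt_iff₀ (by positivity)] at hS
      rw [div_le_iff₀ hs]; linarith
    have h3 := Real.log_le_log (by positivity) this
    rw [Real.log_mul (by norm_num) hd0.ne'] at h3
    linarith [Real.log_two_lt_d9]
  rw [e1, e2, e3]
  have h4 : 0 ≤ (S.card : ℝ) * Real.log d := by positivity
  have h5 := mul_le_mul_of_nonneg_right h1 h4
  have h6 : C * subsetEntropy n S.card ≤ C * (S.card * (3 * Real.log d)) :=
    mul_le_mul_of_nonneg_left (mul_le_mul_of_nonneg_left h2 hs.le) hC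
  linarith

/-- With high probability, all discrepancies are small and few degrees are atypical. -/
lemma prob_bad_le {n : ℕ} (hn : 0 < n) {P : Matrix (Fin n) (Fin n) ℝ} {d C' : ℝ}
    (hsym : ∀ u v, P u v = P v u) (hP : ∀ u v, 0 ≤ P u v ∧ P u v ≤ 1)
    (hd : Real.exp 1 ≤ d) (hq : ∀ u v, P u v ≤ d / n) (hC' : 0 < C') :
    prob P ({A | ∃ S : Finset (Fin n), S.Nonempty ∧ ∃ T : Finset (Fin n), T.Nonempty ∧
        discBound n d (16 * (2 * (C' + 4))) S.card T.card ≤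
          |∑ u ∈ S, ∑ v ∈ T, centered P A u v|} ∪
      {A | ∃ S : Finset (Fin n), (n : ℝ) / (2 * d) < S.card ∧
        S.card * ((16 + 3 * (C' + 4)) * √(d * Real.log d)) ≤
          |∑ u ∈ S, ∑ v, centered P A u v|}) ≤ (n : ℝ) ^ (-C') := by
  have hd0 : 0 < d := (Real.exp_pos 1).trans_le hd
  have hn' : (0 : ℝ) < n := by exact_mod_cast hn
  have hlogn : 0 ≤ Real.log n := Real.log_natCast_nonneg n
  set F : Finset (Finset (Fin n)) := {S : Finset (Fin n) | S.Nonempty} with hF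
  set σ := ∑ S ∈ F, Real.exp (-((C' + 4) * subsetEntropy n S.card)) with hσ
  have hσ0 : 0 ≤ σ := Finset.sum_nonneg fun _ _ => (Real.exp_pos _).le
  have hσ1 : σ ≤ (n : ℝ) ^ (-C') * (1 / 4) := by
    refine (sum_exp_neg_subsetEntropy_le (by linarith)).trans ?_
    rw [Real.rpow_def_of_pos hn']
    nth_rw 1 [← Real.exp_log hn']
    rw [← Real.exp_add]
    have h4 : Real.exp (-2) ≤ 1 / 4 := by
      rw [Real.exp_neg, inv_eq_one_div]
      apply one_div_le_one_div_of_le (by norm_num)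
      have : Real.exp 2 = Real.exp 1 * Real.exp 1 := by rw [← Real.exp_add]; norm_num
      rw [this]; nlinarith [Real.add_one_le_exp (1 : ℝ)]
    calc _ ≤ Real.exp (Real.log n * -C' + -2) := by
          apply Real.exp_le_exp.2; nlinarith
      _ ≤ _ := by
          rw [Real.exp_add]
          exact mul_le_mul_of_nonneg_left h4 (Real.exp_pos _).le
  have hp1 : (n : ℝ) ^ (-C') ≤ 1 :=
    Real.rpow_le_one_of_one_le_of_nonpos (by exact_mod_cast hn) (by linarith)
  refine (prob_union_le hP _ _).trans ?_
  have hb1 : prob P {A | ∃ S : Finset (Fin n), S.Nonempty ∧ ∃ T : Finset (Fin n), T.Nonempty ∧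
        discBound n d (16 * (2 * (C' + 4))) S.card T.card ≤
          |∑ u ∈ S, ∑ v ∈ T, centered P A u v|} ≤ 2 * (σ * σ) := by
    have h1 := prob_exists_le hP (F ×ˢ F) (fun p A =>
      discBound n d (16 * (2 * (C' + 4))) p.1.card p.2.card ≤
          |∑ u ∈ p.1, ∑ v ∈ p.2, centered P A u v|)
    refine (prob_mono hP ?_).trans (h1.trans ?_)
    · rintro A ⟨S, hS, T, hT, h⟩
      exact ⟨(S, T), by simp [hF, hS, hT], h⟩
    · rw [hσ, Finset.sum_mul_sum, ← Finset.sum_product', Finset.mul_sum]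
      refine Finset.sum_le_sum fun p hp => ?_
      have hp' : p.1.Nonempty ∧ p.2.Nonempty := by simpa [hF] using hp
      exact prob_disc_le hsym hP hd0 hq (by linarith) hp'.1 hp'.2
  have hb2 : prob P {A | ∃ S : Finset (Fin n), (n : ℝ) / (2 * d) < S.card ∧
        S.card * ((16 + 3 * (C' + 4)) * √(d * Real.log d)) ≤
          |∑ u ∈ S, ∑ v, centered P A u v|} ≤ 2 * σ := by
    have h1 := prob_exists_le hP
      (F.filter fun S => (n : ℝ) / (2 * d) < S.card) (fun S A =>
        S.card * ((16 + 3 * (C' + 4)) * √(d * Real.log d)) ≤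
          |∑ u ∈ S, ∑ v, centered P A u v|)
    refine (prob_mono hP ?_).trans (h1.trans ?_)
    · rintro A ⟨S, hS, h⟩
      have hne : S.Nonempty := by
        rw [← Finset.card_pos]
        have : (0 : ℝ) < S.card := lt_of_le_of_lt (by positivity) hS
        exact_mod_cast this
      exact ⟨S, by simp [hF, hne, hS], h⟩
    · rw [hσ, Finset.mul_sum]
      refine (Finset.sum_le_sum fun S hS => prob_degree_le hsym hP hd hq (by linarith)
        (Finset.mem_filter.1 hS).2).trans ?_
      exact Finset.sum_le_sum_of_subset_of_nonneg (Finset.filter_subset _ _)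
        fun _ _ _ => by positivity
  nlinarith

lemma sum_two_pow_le_of_le (M : ℕ) {R : ℝ} (hR : 0 ≤ R) :
    ∑ j ∈ Finset.range M, (if (2 : ℝ) ^ j ≤ R then (2 : ℝ) ^ j else 0) ≤ 2 * R := by
  induction M with
  | zero => simpa using hR
  | succ M ih =>
    by_cases h : (2 : ℝ) ^ M ≤ R
    · calc _ ≤ ∑ j ∈ Finset.range (M + 1), (2 : ℝ) ^ j :=
            Finset.sum_le_sum fun j _ => by split_ifs <;> simp
        _ ≤ 2 * R := by
            rw [geom_sum_eq (by norm_num), pow_succ]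
            linarith
    · rw [Finset.sum_range_succ, if_neg h, add_zero]
      exact ih

lemma sum_inv_two_pow_le_of_ge (M : ℕ) {R : ℝ} (hR : 0 < R) :
    ∑ j ∈ Finset.range M, (if R ≤ (2 : ℝ) ^ j then ((2 : ℝ) ^ j)⁻¹ else 0) ≤ 2 / R := by
  induction M generalizing R with
  | zero => simp; positivity
  | succ M ih =>
    by_cases h : R ≤ 1
    · calc _ ≤ ∑ j ∈ Finset.range (M + 1), ((1 : ℝ) / 2) ^ j :=
            Finset.sum_le_sum fun j _ => by split_ifs <;> simp
        _ ≤ 2 := sum_geometric_two_le _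
        _ ≤ 2 / R := by rw [le_div_iff₀ hR]; linarith
    · rw [Finset.sum_range_succ']
      have h1 : ∀ j : ℕ, (if R ≤ (2 : ℝ) ^ (j + 1) then ((2 : ℝ) ^ (j + 1))⁻¹ else 0) =
          1 / 2 * (if R / 2 ≤ (2 : ℝ) ^ j then ((2 : ℝ) ^ j)⁻¹ else 0) := by
        intro j
        have : R ≤ (2 : ℝ) ^ (j + 1) ↔ R / 2 ≤ (2 : ℝ) ^ j := by
          rw [pow_succ, div_le_iff₀ (by norm_num)]
        simp only [this]
        split_ifs
        · rw [pow_succ, mul_inv]; ring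
        · simp
      simp only [h1, ← Finset.mul_sum]
      have h2 := ih (half_pos hR)
      have h3 : 2 / (R / 2) = 2 * (2 / R) := by field_simp
      simp only [pow_zero, if_neg h]
      linarith

lemma card_window_le (M : ℕ) {R d : ℝ} (hd : Real.exp 1 ≤ d) :
    (((Finset.range M).filter fun i => R < √d * 2 ^ i ∧ (2 : ℝ) ^ i < √d * R).card : ℝ) ≤
      3 * Real.log d := by
  have hd0 : 0 < d := (Real.exp_pos 1).trans_le hd
  have hlog : 1 ≤ Real.log d := (Real.le_log_iff_exp_le hd0).2 hd
  set W := (Finset.range M).filter fun i => R < √d * 2 ^ i ∧ (2 : ℝ) ^ i < √d * R with hW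
  rcases W.eq_empty_or_nonempty with h | h
  · rw [h]; simp; linarith
  · have ha := (Finset.mem_filter.1 (W.min'_mem h)).2
    have hb := (Finset.mem_filter.1 (W.max'_mem h)).2
    set a := W.min' h
    set b := W.max' h
    have hab : a ≤ b := W.min'_le_max' h
    have hsub : W ⊆ Finset.Icc a b := fun i hi =>
      Finset.mem_Icc.2 ⟨W.min'_le i hi, W.le_max' i hi⟩
    have hcard : W.card ≤ b + 1 - a := by simpa using Finset.card_le_card hsub
    have hpow : (2 : ℝ) ^ (b - a) ≤ d := by
      have h1 : (2 : ℝ) ^ b < d * 2 ^ a := by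
        calc (2 : ℝ) ^ b < √d * R := hb.2
          _ < √d * (√d * 2 ^ a) := mul_lt_mul_of_pos_left ha.1 (Real.sqrt_pos.2 hd0)
          _ = d * 2 ^ a := by rw [← mul_assoc, Real.mul_self_sqrt hd0.le]
      have h2 : (2 : ℝ) ^ b = 2 ^ (b - a) * 2 ^ a := by rw [← pow_add, Nat.sub_add_cancel hab]
      rw [h2] at h1
      exact (lt_of_mul_lt_mul_right h1 (by positivity)).le
    have h3 : ((b - a : ℕ) : ℝ) * Real.log 2 ≤ Real.log d := by
      rw [← Real.log_pow]
      exact Real.log_le_log (by positivity) hpow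
    have h4 : (W.card : ℝ) ≤ ((b - a : ℕ) : ℝ) + 1 := by
      have : W.card ≤ (b - a) + 1 := by omega
      exact_mod_cast this
    have h5 : (0 : ℝ) ≤ ((b - a : ℕ) : ℝ) := Nat.cast_nonneg _
    nlinarith [Real.log_two_gt_d9]

lemma sum_linear_le {M : ℕ} {s : ℕ → ℝ} {X Y c : ℝ} (hs : ∀ i, 0 ≤ s i) (hX : 0 < X)
    (hY : 0 < Y) (hc : 0 ≤ c) (hsX : ∑ i ∈ Finset.range M, (4 : ℝ) ^ i * s i ≤ X ^ 2) :
    ∑ i ∈ Finset.range M, ∑ j ∈ Finset.range M,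
      (if (2 : ℝ) ^ j * X ≤ c * (2 ^ i * Y) then (2 : ℝ) ^ i * 2 ^ j * s i else 0) ≤
      2 * c * X * Y := by
  calc _ ≤ ∑ i ∈ Finset.range M, 2 * c * Y / X * ((4 : ℝ) ^ i * s i) := by
        refine Finset.sum_le_sum fun i _ => ?_
        have h := sum_two_pow_le_of_le M (R := c * (2 ^ i * Y) / X) (by positivity)
        have e : ∀ j : ℕ, (if (2 : ℝ) ^ j * X ≤ c * (2 ^ i * Y)
            then (2 : ℝ) ^ i * 2 ^ j * s i else 0) = (2 : ℝ) ^ i * s i *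
              (if (2 : ℝ) ^ j ≤ c * (2 ^ i * Y) / X then (2 : ℝ) ^ j else 0) := by
          intro j
          simp only [le_div_iff₀ hX]
          split_ifs
          · ring
          · simp
        simp only [e, ← Finset.mul_sum]
        calc _ ≤ (2 : ℝ) ^ i * s i * (2 * (c * (2 ^ i * Y) / X)) :=
              mul_le_mul_of_nonneg_left h (mul_nonneg (by positivity) (hs i))
          _ = _ := by
              have : (4 : ℝ) ^ i = 2 ^ i * 2 ^ i := by rw [← mul_pow]; norm_num
              rw [this]; field_simp
    _ ≤ 2 * c * Y / X * X ^ 2 := by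
        rw [← Finset.mul_sum]
        exact mul_le_mul_of_nonneg_left hsX (by positivity)
    _ = _ := by field_simp

lemma sum_level_le {n : ℝ} {M : ℕ} {t : ℕ → ℝ} {Y : ℝ} (hn : 0 < n) (ht : ∀ j, 0 ≤ t j)
    (htn : ∀ j, t j ≤ n) (hY : 0 < Y)
    (htY : ∑ j ∈ Finset.range M, (4 : ℝ) ^ j * t j ≤ Y ^ 2) :
    ∑ j ∈ Finset.range M, (2 : ℝ) ^ j * √(t j) * √√(t j / n) ≤ 4 * Y := by
  set R := Y / √n with hR
  have hsn : 0 < √n := Real.sqrt_pos.2 hn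
  have hR0 : 0 < R := by positivity
  have hsplit : ∀ j, (2 : ℝ) ^ j * √(t j) * √√(t j / n) ≤
      √n * (if (2 : ℝ) ^ j ≤ R then (2 : ℝ) ^ j else 0) +
      (2 ^ j * √(t j)) * (if R ≤ (2 : ℝ) ^ j then √√(t j / n) else 0) := by
    intro j
    have h0 : 0 ≤ (2 : ℝ) ^ j * √(t j) * √√(t j / n) := by positivity
    rcases le_total R ((2 : ℝ) ^ j) with h | h
    · rw [if_pos h]
      have : 0 ≤ √n * (if (2 : ℝ) ^ j ≤ R then (2 : ℝ) ^ j else 0) := by positivity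
      linarith
    · rw [if_pos h]
      have h1 : √(t j) ≤ √n := Real.sqrt_le_sqrt (htn j)
      have h2 : √√(t j / n) ≤ 1 :=
        Real.sqrt_le_one.2 (Real.sqrt_le_one.2 ((div_le_one hn).2 (htn j)))
      have h3 : 0 ≤ (2 ^ j * √(t j)) * (if R ≤ (2 : ℝ) ^ j then √√(t j / n) else 0) := by
        positivity
      have h4 : (2 : ℝ) ^ j * √(t j) * √√(t j / n) ≤ 2 ^ j * √n * 1 := by gcongr
      linarith
  refine (Finset.sum_le_sum fun j _ => hsplit j).trans ?_
  rw [Finset.sum_add_distrib, ← Finset.mul_sum]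
  have hA : √n * ∑ j ∈ Finset.range M, (if (2 : ℝ) ^ j ≤ R then (2 : ℝ) ^ j else 0) ≤ 2 * Y := by
    calc _ ≤ √n * (2 * R) :=
          mul_le_mul_of_nonneg_left (sum_two_pow_le_of_le M hR0.le) hsn.le
      _ = 2 * Y := by rw [hR]; field_simp
  have hB : ∑ j ∈ Finset.range M, (2 ^ j * √(t j)) *
      (if R ≤ (2 : ℝ) ^ j then √√(t j / n) else 0) ≤ 2 * Y := by
    refine abs_le_of_sq_le_sq' (b := 2 * Y) ?_ (by positivity) |>.2
    refine (Finset.sum_mul_sq_le_sq_mul_sq _ _ _).trans ?_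
    have h1 : ∑ j ∈ Finset.range M, ((2 : ℝ) ^ j * √(t j)) ^ 2 ≤ Y ^ 2 := by
      refine le_trans (le_of_eq ?_) htY
      refine Finset.sum_congr rfl fun j _ => ?_
      rw [mul_pow, Real.sq_sqrt (ht j), ← pow_mul, mul_comm j 2, pow_mul]
      norm_num
    have h2 : ∑ j ∈ Finset.range M, (if R ≤ (2 : ℝ) ^ j then √√(t j / n) else 0) ^ 2 ≤ 2 := by
      calc _ ≤ ∑ j ∈ Finset.range M,
            R * (if R ≤ (2 : ℝ) ^ j then ((2 : ℝ) ^ j)⁻¹ else 0) := by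
            refine Finset.sum_le_sum fun j hj => ?_
            split_ifs with h
            · rw [Real.sq_sqrt (Real.sqrt_nonneg _)]
              have h3 : (4 : ℝ) ^ j * t j ≤ Y ^ 2 :=
                (Finset.single_le_sum (f := fun j => (4 : ℝ) ^ j * t j)
                  (fun i _ => mul_nonneg (by positivity) (ht i)) hj).trans htY
              apply Real.sqrt_le_iff.2
              refine ⟨by positivity, ?_⟩
              rw [hR, mul_pow, div_pow, Real.sq_sqrt hn.le, inv_pow, ← pow_mul, mul_comm j 2,
                pow_mul]
              norm_num
              rw [← div_eq_mul_inv, div_div, div_le_div_iff₀ hn (by positivity)]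
              nlinarith
            · simp
        _ ≤ R * (2 / R) := by
            rw [← Finset.mul_sum]
            exact mul_le_mul_of_nonneg_left (sum_inv_two_pow_le_of_ge M hR0) hR0.le
        _ = 2 := by field_simp
    calc _ ≤ Y ^ 2 * 2 := mul_le_mul h1 h2 (Finset.sum_nonneg fun _ _ => sq_nonneg _)
          (sq_nonneg _)
      _ ≤ (2 * Y) ^ 2 := by nlinarith [sq_nonneg Y]
  linarith

lemma sum_window_le {n : ℝ} {M : ℕ} {s t : ℕ → ℝ} {X Y d : ℝ} (hn : 0 < n)
    (hs : ∀ i, 0 ≤ s i) (ht : ∀ j, 0 ≤ t j) (htn : ∀ j, t j ≤ n) (hX : 0 < X) (hY : 0 < Y)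
    (hd : Real.exp 1 ≤ d)
    (hsX : ∑ i ∈ Finset.range M, (4 : ℝ) ^ i * s i ≤ X ^ 2)
    (htY : ∑ j ∈ Finset.range M, (4 : ℝ) ^ j * t j ≤ Y ^ 2) :
    ∑ j ∈ Finset.range M, ∑ i ∈ Finset.range M,
      (if (2 : ℝ) ^ j * X < √d * (2 ^ i * Y) ∧ (2 : ℝ) ^ i * Y < √d * (2 ^ j * X) then
        (2 ^ i * √(s i)) * (2 ^ j * √(t j) * √√(t j / n)) else 0) ≤
      8 * √(Real.log d) * X * Y := by
  have hd0 : 0 < d := (Real.exp_pos 1).trans_le hd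
  have hlog : 1 ≤ Real.log d := (Real.le_log_iff_exp_le hd0).2 hd
  have hinner : ∀ j, ∑ i ∈ Finset.range M,
      (if (2 : ℝ) ^ j * X < √d * (2 ^ i * Y) ∧ (2 : ℝ) ^ i * Y < √d * (2 ^ j * X) then
        (2 ^ i * √(s i)) * (2 ^ j * √(t j) * √√(t j / n)) else 0) ≤
      (2 * √(Real.log d) * X) * (2 ^ j * √(t j) * √√(t j / n)) := by
    intro j
    have hiff : ∀ i : ℕ, ((2 : ℝ) ^ j * X < √d * (2 ^ i * Y) ∧
        (2 : ℝ) ^ i * Y < √d * (2 ^ j * X)) ↔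
        (2 ^ j * X / Y < √d * 2 ^ i ∧ (2 : ℝ) ^ i < √d * (2 ^ j * X / Y)) := by
      intro i
      rw [div_lt_iff₀ hY, ← mul_div_assoc, lt_div_iff₀ hY, mul_assoc]
    simp only [hiff]
    rw [← Finset.sum_filter, ← Finset.sum_mul]
    apply mul_le_mul_of_nonneg_right _ (by positivity)
    set W := (Finset.range M).filter fun i =>
      2 ^ j * X / Y < √d * 2 ^ i ∧ (2 : ℝ) ^ i < √d * (2 ^ j * X / Y)
    have hW : (W.card : ℝ) ≤ 3 * Real.log d := card_window_le M hd
    refine abs_le_of_sq_le_sq' (b := 2 * √(Real.log d) * X) ?_ (by positivity) |>.2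
    have hcs := sq_sum_le_card_mul_sum_sq (s := W) (f := fun i => (2 : ℝ) ^ i * √(s i))
    refine hcs.trans ?_
    have h1 : ∑ i ∈ W, ((2 : ℝ) ^ i * √(s i)) ^ 2 ≤ X ^ 2 := by
      refine le_trans ?_ hsX
      refine (Finset.sum_le_sum_of_subset_of_nonneg (Finset.filter_subset _ _)
        fun _ _ _ => sq_nonneg _).trans (le_of_eq ?_)
      refine Finset.sum_congr rfl fun i _ => ?_
      rw [mul_pow, Real.sq_sqrt (hs i), ← pow_mul, mul_comm i 2, pow_mul]
      norm_num
    calc _ ≤ 3 * Real.log d * X ^ 2 :=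
          mul_le_mul hW h1 (Finset.sum_nonneg fun _ _ => sq_nonneg _) (by positivity)
      _ ≤ (2 * √(Real.log d) * X) ^ 2 := by
          rw [mul_pow, mul_pow, Real.sq_sqrt (by linarith)]
          nlinarith [sq_nonneg X, mul_nonneg (by linarith : 0 ≤ Real.log d) (sq_nonneg X)]
  refine (Finset.sum_le_sum fun j _ => hinner j).trans ?_
  rw [← Finset.mul_sum]
  calc _ ≤ (2 * √(Real.log d) * X) * (4 * Y) :=
        mul_le_mul_of_nonneg_left (sum_level_le hn ht htn hY htY) (by positivity)
    _ = _ := by ring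

/-- Summation of the discrepancy bounds over pairs of dyadic levels. -/
lemma sum_levels_le {n : ℕ} {M : ℕ} {s t : ℕ → ℝ} {E : ℕ → ℕ → ℝ} {X Y d D K : ℝ}
    (hn : 0 < n) (hs : ∀ i, 0 ≤ s i) (hsn : ∀ i, s i ≤ n) (ht : ∀ j, 0 ≤ t j)
    (htn : ∀ j, t j ≤ n) (hX : 0 < X) (hY : 0 < Y) (hd : Real.exp 1 ≤ d) (hD : 0 ≤ D)
    (hK : 0 ≤ K)
    (hsX : ∑ i ∈ Finset.range M, (4 : ℝ) ^ i * s i ≤ X ^ 2)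
    (htY : ∑ j ∈ Finset.range M, (4 : ℝ) ^ j * t j ≤ Y ^ 2)
    (hE1 : ∀ i j, E i j ≤ D * d * s i) (hE2 : ∀ i j, E i j ≤ D * d * t j)
    (hE3 : ∀ i j, E i j ≤ discBound n d K (s i) (t j)) :
    ∑ i ∈ Finset.range M, ∑ j ∈ Finset.range M, (2 : ℝ) ^ i * 2 ^ j * E i j ≤
      (4 * D + 20 * K) * √(d * Real.log d) * X * Y := by
  have hn' : (0 : ℝ) < n := by exact_mod_cast hn
  have hd0 : 0 < d := (Real.exp_pos 1).trans_le hd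
  have hlog : 1 ≤ Real.log d := (Real.le_log_iff_exp_le hd0).2 hd
  have hsd : 0 < √d := Real.sqrt_pos.2 hd0
  have hsl : 1 ≤ √(Real.log d) := Real.one_le_sqrt.2 hlog
  have hdd : √d * √d = d := Real.mul_self_sqrt hd0.le
  let Zs : ℝ → ℕ → ℕ → ℝ := fun c i j =>
    if (2 : ℝ) ^ j * X ≤ c * (2 ^ i * Y) then (2 : ℝ) ^ i * 2 ^ j * s i else 0
  let Zt : ℝ → ℕ → ℕ → ℝ := fun c j i =>
    if (2 : ℝ) ^ i * Y ≤ c * (2 ^ j * X) then (2 : ℝ) ^ j * 2 ^ i * t j else 0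
  let Wt : ℕ → ℕ → ℝ := fun j i =>
    if (2 : ℝ) ^ j * X < √d * (2 ^ i * Y) ∧ (2 : ℝ) ^ i * Y < √d * (2 ^ j * X) then
        (2 ^ i * √(s i)) * (2 ^ j * √(t j) * √√(t j / n)) else 0
  let Ws : ℕ → ℕ → ℝ := fun i j =>
    if (2 : ℝ) ^ i * Y < √d * (2 ^ j * X) ∧ (2 : ℝ) ^ j * X < √d * (2 ^ i * Y) then
        (2 ^ j * √(t j)) * (2 ^ i * √(s i) * √√(s i / n)) else 0
  have hZs0 : ∀ c i j, 0 ≤ Zs c i j := by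
    intro c i j
    have := hs i
    dsimp only [Zs]; split_ifs <;> positivity
  have hZt0 : ∀ c i j, 0 ≤ Zt c i j := by
    intro c i j
    have := ht i
    dsimp only [Zt]; split_ifs <;> positivity
  have hWs0 : ∀ i j, 0 ≤ Ws i j := by
    intro i j; dsimp only [Ws]; split_ifs <;> positivity
  have hWt0 : ∀ i j, 0 ≤ Wt i j := by
    intro i j; dsimp only [Wt]; split_ifs <;> positivity
  have hpt : ∀ i j, (2 : ℝ) ^ i * 2 ^ j * E i j ≤
      D * d * Zs (√d)⁻¹ i j + D * d * Zt (√d)⁻¹ j i + K * Zs √d i j + K * Zt √d j i +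
        K * √d * Wt j i + K * √d * Ws i j := by
    intro i j
    have hDd : 0 ≤ D * d := by positivity
    have hKd : 0 ≤ K * √d := by positivity
    have hp : (0 : ℝ) < 2 ^ i * 2 ^ j := by positivity
    have q1 := mul_nonneg hDd (hZs0 (√d)⁻¹ i j)
    have q2 := mul_nonneg hDd (hZt0 (√d)⁻¹ j i)
    have q3 := mul_nonneg hK (hZs0 √d i j)
    have q4 := mul_nonneg hK (hZt0 √d j i)
    have q5 := mul_nonneg hKd (hWt0 j i)
    have q6 := mul_nonneg hKd (hWs0 i j)
    by_cases h1 : (2 : ℝ) ^ j * X ≤ (√d)⁻¹ * (2 ^ i * Y)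
    · have e : D * d * Zs (√d)⁻¹ i j = 2 ^ i * 2 ^ j * (D * d * s i) := by
        dsimp only [Zs]; rw [if_pos h1]; ring
      have := mul_le_mul_of_nonneg_left (hE1 i j) hp.le
      linarith
    by_cases h2 : (2 : ℝ) ^ i * Y ≤ (√d)⁻¹ * (2 ^ j * X)
    · have e : D * d * Zt (√d)⁻¹ j i = 2 ^ i * 2 ^ j * (D * d * t j) := by
        dsimp only [Zt]; rw [if_pos h2]; ring
      have := mul_le_mul_of_nonneg_left (hE2 i j) hp.le
      linarith
    push Not at h1 h2
    rw [inv_mul_lt_iff₀ hsd] at h1 h2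
    have e3 : K * Zs √d i j = 2 ^ i * 2 ^ j * (K * s i) := by
      dsimp only [Zs]; rw [if_pos h2.le]; ring
    have e4 : K * Zt √d j i = 2 ^ i * 2 ^ j * (K * t j) := by
      dsimp only [Zt]; rw [if_pos h1.le]; ring
    have hsq : √(d * s i * t j) = √d * √(s i) * √(t j) := by
      rw [Real.sqrt_mul (mul_nonneg hd0.le (hs i)), Real.sqrt_mul hd0.le]
    have e5 : K * √d * Wt j i = 2 ^ i * 2 ^ j * (K * (√(d * s i * t j) * √√(t j / n))) := by
      dsimp only [Wt]; rw [if_pos ⟨h2, h1⟩, hsq]; ring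
    have e6 : K * √d * Ws i j = 2 ^ i * 2 ^ j * (K * (√(d * s i * t j) * √√(s i / n))) := by
      dsimp only [Ws]; rw [if_pos ⟨h1, h2⟩, hsq]; ring
    have := mul_le_mul_of_nonneg_left (hE3 i j) hp.le
    unfold discBound at this
    linarith
  refine (Finset.sum_le_sum fun i _ => Finset.sum_le_sum fun j _ => hpt i j).trans ?_
  simp only [Finset.sum_add_distrib, ← Finset.mul_sum]
  have s1 : ∑ i ∈ Finset.range M, ∑ j ∈ Finset.range M, Zs (√d)⁻¹ i j ≤ 2 * (√d)⁻¹ * X * Y :=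
    sum_linear_le hs hX hY (by positivity) hsX
  have s2 : ∑ i ∈ Finset.range M, ∑ j ∈ Finset.range M, Zt (√d)⁻¹ j i ≤
      2 * (√d)⁻¹ * Y * X := by
    rw [Finset.sum_comm]; exact sum_linear_le ht hY hX (by positivity) htY
  have s3 : ∑ i ∈ Finset.range M, ∑ j ∈ Finset.range M, Zs √d i j ≤ 2 * √d * X * Y :=
    sum_linear_le hs hX hY (by positivity) hsX
  have s4 : ∑ i ∈ Finset.range M, ∑ j ∈ Finset.range M, Zt √d j i ≤ 2 * √d * Y * X := by
    rw [Finset.sum_comm]; exact sum_linear_le ht hY hX (by positivity) htY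
  have s5 : ∑ i ∈ Finset.range M, ∑ j ∈ Finset.range M, Wt j i ≤
      8 * √(Real.log d) * X * Y := by
    rw [Finset.sum_comm]; exact sum_window_le hn' hs ht htn hX hY hd hsX htY
  have s6 : ∑ i ∈ Finset.range M, ∑ j ∈ Finset.range M, Ws i j ≤
      8 * √(Real.log d) * Y * X := sum_window_le hn' ht hs hsn hY hX hd htY hsX
  have hinv : d * (√d)⁻¹ = √d := by
    nth_rw 1 [← hdd]; field_simp
  have hXY : 0 < X * Y := by positivity
  have hmain : √d * (X * Y) ≤ √(d * Real.log d) * (X * Y) := by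
    rw [Real.sqrt_mul hd0.le]
    have : √d * 1 ≤ √d * √(Real.log d) := mul_le_mul_of_nonneg_left hsl hsd.le
    rw [mul_one] at this
    exact mul_le_mul_of_nonneg_right this hXY.le
  have b1 := mul_le_mul_of_nonneg_left s1 (by positivity : 0 ≤ D * d)
  have b2 := mul_le_mul_of_nonneg_left s2 (by positivity : 0 ≤ D * d)
  have b3 := mul_le_mul_of_nonneg_left s3 hK
  have b4 := mul_le_mul_of_nonneg_left s4 hK
  have b5 := mul_le_mul_of_nonneg_left s5 (by positivity : 0 ≤ K * √d)
  have b6 := mul_le_mul_of_nonneg_left s6 (by positivity : 0 ≤ K * √d)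
  have c1 : D * d * (2 * (√d)⁻¹ * X * Y) = 2 * D * (√d * (X * Y)) := by
    linear_combination (2 * D * X * Y) * hinv
  have c2 : D * d * (2 * (√d)⁻¹ * Y * X) = 2 * D * (√d * (X * Y)) := by
    linear_combination (2 * D * X * Y) * hinv
  have c5 : K * √d * (8 * √(Real.log d) * X * Y) = 8 * K * (√(d * Real.log d) * (X * Y)) := by
    rw [Real.sqrt_mul hd0.le]; ring
  have c6 : K * √d * (8 * √(Real.log d) * Y * X) = 8 * K * (√(d * Real.log d) * (X * Y)) := by
    rw [Real.sqrt_mul hd0.le]; ring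
  rw [c1] at b1
  rw [c2] at b2
  rw [c5] at b5
  rw [c6] at b6
  have m1 := mul_le_mul_of_nonneg_left hmain hD
  have m2 := mul_le_mul_of_nonneg_left hmain hK
  linarith

lemma natCast_eq_sum_testBit {M m : ℕ} (hm : m < 2 ^ M) :
    (m : ℝ) = ∑ i ∈ Finset.range M, if m.testBit i then (2 : ℝ) ^ i else 0 := by
  rw [← Finset.sum_filter]
  have h : (Finset.range M).filter (fun i => m.testBit i) = m.bitIndices.toFinset := by
    ext i
    simp only [Finset.mem_filter, Finset.mem_range, List.mem_toFinset, Nat.mem_bitIndices,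
      and_iff_right_iff_imp]
    intro hi
    by_contra hM
    have h2 := Nat.testBit_lt_two_pow (hm.trans_le (Nat.pow_le_pow_right two_pos (not_lt.1 hM)))
    simp [hi] at h2
  rw [h]
  exact_mod_cast (Finset.sum_toFinset_bitIndices_two_pow m).symm

lemma sum_four_pow_mul_card_le {n M : ℕ} {x : Fin n → ℕ} (hM : ∀ u, x u < 2 ^ M) :
    ∑ i ∈ Finset.range M, (4 : ℝ) ^ i * ((Finset.univ.filter fun u => (x u).testBit i).card : ℝ) ≤
      ∑ u, (x u : ℝ) ^ 2 := by
  have h : ∀ i, (4 : ℝ) ^ i * ((Finset.univ.filter fun u => (x u).testBit i).card : ℝ) =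
      ∑ u, (if (x u).testBit i then (2 : ℝ) ^ i else 0) ^ 2 := by
    intro i
    rw [Finset.card_filter, Nat.cast_sum, Finset.mul_sum]
    refine Finset.sum_congr rfl fun u _ => ?_
    split_ifs
    · rw [← pow_mul, mul_comm i 2, pow_mul]; norm_num
    · simp
  simp_rw [h]
  rw [Finset.sum_comm]
  refine Finset.sum_le_sum fun u _ => ?_
  conv_rhs => rw [natCast_eq_sum_testBit (hM u)]
  refine Finset.sum_sq_le_sq_sum_of_nonneg fun i _ => ?_
  split_ifs <;> positivity

lemma sum_bilin_eq_sum_levels {n M : ℕ} (B : Fin n → Fin n → ℝ) {x y : Fin n → ℕ}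
    (hx : ∀ u, x u < 2 ^ M) (hy : ∀ u, y u < 2 ^ M) :
    ∑ u, ∑ v, (x u : ℝ) * y v * B u v =
      ∑ i ∈ Finset.range M, ∑ j ∈ Finset.range M, 2 ^ i * 2 ^ j *
        ∑ u ∈ Finset.univ.filter (fun u => (x u).testBit i),
          ∑ v ∈ Finset.univ.filter (fun v => (y v).testBit j), B u v := by
  calc ∑ u, ∑ v, (x u : ℝ) * y v * B u v
      = ∑ u, ∑ v, ∑ i ∈ Finset.range M, ∑ j ∈ Finset.range M,
          (if (x u).testBit i then (2 : ℝ) ^ i else 0) *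
            (if (y v).testBit j then (2 : ℝ) ^ j else 0) * B u v := by
        refine Finset.sum_congr rfl fun u _ => Finset.sum_congr rfl fun v _ => ?_
        rw [natCast_eq_sum_testBit (hx u), natCast_eq_sum_testBit (hy v),
          Finset.sum_mul_sum, Finset.sum_mul]
        exact Finset.sum_congr rfl fun i _ => Finset.sum_mul _ _ _
    _ = ∑ i ∈ Finset.range M, ∑ j ∈ Finset.range M, ∑ u, ∑ v,
          (if (x u).testBit i then (2 : ℝ) ^ i else 0) *
            (if (y v).testBit j then (2 : ℝ) ^ j else 0) * B u v := by
        simp_rw [Finset.sum_comm (s := (Finset.univ : Finset (Fin n))) (t := Finset.range M)]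
    _ = _ := by
        refine Finset.sum_congr rfl fun i _ => Finset.sum_congr rfl fun j _ => ?_
        rw [Finset.sum_filter, Finset.mul_sum]
        refine Finset.sum_congr rfl fun u _ => ?_
        rw [Finset.sum_filter]
        split_ifs
        · rw [Finset.mul_sum]
          refine Finset.sum_congr rfl fun v _ => ?_
          split_ifs <;> simp
        · simp

/-- A matrix is controlled on `J` when its rectangle sums are bounded by the row and column
masses on `J` and satisfy the discrepancy bound. -/
structure RectangleBounds {n : ℕ} (B : Fin n → Fin n → ℝ) (J : Finset (Fin n)) (d D K : ℝ) :
    Prop where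
  row : ∀ S ⊆ J, ∀ T, |∑ u ∈ S, ∑ v ∈ T, B u v| ≤ D * d * S.card
  col : ∀ S, ∀ T ⊆ J, |∑ u ∈ S, ∑ v ∈ T, B u v| ≤ D * d * T.card
  disc : ∀ S T : Finset (Fin n), S.Nonempty → T.Nonempty →
    |∑ u ∈ S, ∑ v ∈ T, B u v| ≤ discBound n d K S.card T.card

lemma discBound_nonneg {n : ℕ} {d K s t : ℝ} (hK : 0 ≤ K) (hs : 0 ≤ s) (ht : 0 ≤ t) :
    0 ≤ discBound n d K s t := by
  unfold discBound; positivity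

lemma RectangleBounds.natCast_bilin_le {n : ℕ} {B : Fin n → Fin n → ℝ}
    {J : Finset (Fin n)} {d D K : ℝ} (h : RectangleBounds B J d D K) (hn : 0 < n)
    (hd : Real.exp 1 ≤ d) (hD : 0 ≤ D) (hK : 0 ≤ K)
    {x y : Fin n → ℕ} (hx : ∀ u, u ∉ J → x u = 0) (hy : ∀ u, u ∉ J → y u = 0) :
    |∑ u, ∑ v, (x u : ℝ) * y v * B u v| ≤
      (4 * D + 20 * K) * √(d * Real.log d) * sqnorm (fun u => (x u : ℝ)) *
        sqnorm (fun u => (y u : ℝ)) := by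
  have hd0 : 0 < d := (Real.exp_pos 1).trans_le hd
  have hnn : 0 ≤ (4 * D + 20 * K) * √(d * Real.log d) * sqnorm (fun u => (x u : ℝ)) *
        sqnorm (fun u => (y u : ℝ)) := by unfold sqnorm; positivity
  by_cases hx0 : ∀ u, x u = 0
  · simpa [hx0] using hnn
  by_cases hy0 : ∀ u, y u = 0
  · simpa [hy0] using hnn
  have pos : ∀ z : Fin n → ℕ, (¬ ∀ u, z u = 0) → 0 < sqnorm (fun u => (z u : ℝ)) := by
    intro z hz
    push Not at hz
    obtain ⟨u, hu⟩ := hz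
    exact Real.sqrt_pos.2 (Finset.sum_pos' (fun i _ => sq_nonneg _)
      ⟨u, Finset.mem_univ u, by positivity⟩)
  have hsq : ∀ z : Fin n → ℕ, sqnorm (fun u => (z u : ℝ)) ^ 2 = ∑ u, (z u : ℝ) ^ 2 :=
    fun z => Real.sq_sqrt (Finset.sum_nonneg fun i _ => sq_nonneg _)
  set M := ∑ u, (x u + y u) with hMdef
  have hle : ∀ u, x u + y u ≤ M := fun u =>
    Finset.single_le_sum (f := fun u => x u + y u) (fun _ _ => Nat.zero_le _) (Finset.mem_univ u)
  have hxM : ∀ u, x u < 2 ^ M := fun u =>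
    (by have := hle u; omega : x u ≤ M).trans_lt Nat.lt_two_pow_self
  have hyM : ∀ u, y u < 2 ^ M := fun u =>
    (by have := hle u; omega : y u ≤ M).trans_lt Nat.lt_two_pow_self
  rw [sum_bilin_eq_sum_levels B hxM hyM]
  have hsub : ∀ z : Fin n → ℕ, (∀ u, u ∉ J → z u = 0) → ∀ i,
      (Finset.univ.filter fun u => (z u).testBit i) ⊆ J := by
    intro z hz i u hu
    by_contra huJ
    simp [hz u huJ] at hu
  have hcard : ∀ S : Finset (Fin n), (S.card : ℝ) ≤ n := fun S => by
    exact_mod_cast (Finset.card_le_univ S).trans_eq (Fintype.card_fin n)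
  refine (Finset.abs_sum_le_sum_abs _ _).trans ((Finset.sum_le_sum fun i _ =>
    Finset.abs_sum_le_sum_abs _ _).trans ?_)
  simp_rw [abs_mul, abs_pow, abs_two]
  refine sum_levels_le hn
    (s := fun i => ((Finset.univ.filter fun u => (x u).testBit i).card : ℝ))
    (t := fun i => ((Finset.univ.filter fun u => (y u).testBit i).card : ℝ))
    (fun i => Nat.cast_nonneg _) (fun i => hcard _) (fun i => Nat.cast_nonneg _)
    (fun i => hcard _) (pos x hx0) (pos y hy0) hd hD hK ?_ ?_
    (fun i j => h.row _ (hsub x hx i) _) (fun i j => h.col _ _ (hsub y hy j)) (fun i j => ?_)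
  · rw [hsq]; exact sum_four_pow_mul_card_le hxM
  · rw [hsq]; exact sum_four_pow_mul_card_le hyM
  · rcases (Finset.univ.filter fun u => (x u).testBit i).eq_empty_or_nonempty with hS | hS
    · rw [hS]
      simpa using discBound_nonneg hK le_rfl (Nat.cast_nonneg _)
    · rcases (Finset.univ.filter fun u => (y u).testBit j).eq_empty_or_nonempty with hT | hT
      · rw [hT]
        simpa using discBound_nonneg hK (Nat.cast_nonneg _) le_rfl
      · exact h.disc _ _ hS hT

lemma RectangleBounds.bilin_le_of_nonneg {n : ℕ} {B : Fin n → Fin n → ℝ}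
    {J : Finset (Fin n)} {d D K : ℝ} (h : RectangleBounds B J d D K) (hn : 0 < n)
    (hd : Real.exp 1 ≤ d) (hD : 0 ≤ D) (hK : 0 ≤ K) {x y : Fin n → ℝ}
    (hx0 : ∀ u, 0 ≤ x u) (hy0 : ∀ u, 0 ≤ y u)
    (hx : ∀ u, u ∉ J → x u = 0) (hy : ∀ u, u ∉ J → y u = 0) :
    |∑ u, ∑ v, x u * y v * B u v| ≤
      (4 * D + 20 * K) * √(d * Real.log d) * sqnorm x * sqnorm y := by
  have lim : ∀ z : Fin n → ℝ, (∀ u, 0 ≤ z u) → ∀ u,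
      Tendsto (fun N : ℕ => (⌊z u * (N : ℝ)⌋₊ : ℝ) / (N : ℝ)) atTop (nhds (z u)) :=
    fun z hz u => (tendsto_nat_floor_mul_div_atTop (hz u)).comp tendsto_natCast_atTop_atTop
  have limn : ∀ z : Fin n → ℝ, (∀ u, 0 ≤ z u) →
      Tendsto (fun N : ℕ => sqnorm (fun u => (⌊z u * (N : ℝ)⌋₊ : ℝ) / (N : ℝ))) atTop
        (nhds (sqnorm z)) :=
    fun z hz => (tendsto_finsetSum _ fun u _ => (lim z hz u).pow 2).sqrt
  refine le_of_tendsto_of_tendsto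
    (tendsto_finsetSum Finset.univ fun u _ => tendsto_finsetSum Finset.univ fun v _ =>
      ((lim x hx0 u).mul (lim y hy0 v)).mul_const (B u v)).abs
    (((limn x hx0).const_mul _).mul (limn y hy0)) ?_
  filter_upwards [eventually_gt_atTop 0] with N hN
  have hN' : (0 : ℝ) < N := by exact_mod_cast hN
  have key := h.natCast_bilin_le hn hd hD hK (x := fun u => ⌊x u * (N : ℝ)⌋₊)
    (y := fun u => ⌊y u * (N : ℝ)⌋₊) (fun u hu => by simp [hx u hu]) (fun u hu => by simp [hy u hu])
  have hs : ∀ z : Fin n → ℝ, sqnorm (fun u => z u / (N : ℝ)) = sqnorm z / N := by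
    intro z
    unfold sqnorm
    simp_rw [div_pow]
    rw [← Finset.sum_div, Real.sqrt_div' _ (by positivity), Real.sqrt_sq hN'.le]
  have e1 : ∑ u, ∑ v, (⌊x u * (N : ℝ)⌋₊ : ℝ) / (N : ℝ) * ((⌊y v * (N : ℝ)⌋₊ : ℝ) / (N : ℝ)) * B u v
      = (∑ u, ∑ v, (⌊x u * (N : ℝ)⌋₊ : ℝ) * (⌊y v * (N : ℝ)⌋₊ : ℝ) * B u v) / ((N : ℝ) * N) := by
    simp_rw [Finset.sum_div]
    refine Finset.sum_congr rfl fun u _ => Finset.sum_congr rfl fun v _ => ?_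
    field_simp
  rw [e1, hs, hs, abs_div, abs_of_pos (mul_pos hN' hN')]
  calc _ ≤ _ := div_le_div_of_nonneg_right key (mul_pos hN' hN').le
    _ = _ := by ring

lemma sqnorm_le_sqnorm {n : ℕ} {x y : Fin n → ℝ} (h : ∀ u, |x u| ≤ |y u|) :
    sqnorm x ≤ sqnorm y :=
  Real.sqrt_le_sqrt (Finset.sum_le_sum fun u _ => sq_le_sq.2 (h u))

lemma sqnorm_nonneg {n : ℕ} (x : Fin n → ℝ) : 0 ≤ sqnorm x := Real.sqrt_nonneg _

lemma RectangleBounds.bilin_le {n : ℕ} {B : Fin n → Fin n → ℝ}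
    {J : Finset (Fin n)} {d D K : ℝ} (h : RectangleBounds B J d D K) (hn : 0 < n)
    (hd : Real.exp 1 ≤ d) (hD : 0 ≤ D) (hK : 0 ≤ K) {x y : Fin n → ℝ}
    (hx : ∀ u, u ∉ J → x u = 0) (hy : ∀ u, u ∉ J → y u = 0) :
    |∑ u, ∑ v, x u * y v * B u v| ≤
      4 * (4 * D + 20 * K) * √(d * Real.log d) * sqnorm x * sqnorm y := by
  have hR : 0 ≤ (4 * D + 20 * K) * √(d * Real.log d) := by positivity
  have key : ∀ x' y' : Fin n → ℝ, (∀ u, 0 ≤ x' u) → (∀ u, 0 ≤ y' u) → (∀ u, x' u ≤ |x u|) →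
      (∀ u, y' u ≤ |y u|) → |∑ u, ∑ v, x' u * y' v * B u v| ≤
        (4 * D + 20 * K) * √(d * Real.log d) * sqnorm x * sqnorm y := by
    intro x' y' hx' hy' hxx hyy
    have hsx : sqnorm x' ≤ sqnorm x :=
      sqnorm_le_sqnorm fun u => by rw [abs_of_nonneg (hx' u)]; exact hxx u
    have hsy : sqnorm y' ≤ sqnorm y :=
      sqnorm_le_sqnorm fun u => by rw [abs_of_nonneg (hy' u)]; exact hyy u
    refine (h.bilin_le_of_nonneg hn hd hD hK hx' hy'
      (fun u hu => le_antisymm (by simpa [hx u hu] using hxx u) (hx' u))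
      (fun u hu => le_antisymm (by simpa [hy u hu] using hyy u) (hy' u))).trans ?_
    have := sqnorm_nonneg x
    have := sqnorm_nonneg y'
    gcongr
  have e : ∑ u, ∑ v, x u * y v * B u v =
      ∑ u, ∑ v, (x u)⁺ * (y v)⁺ * B u v - ∑ u, ∑ v, (x u)⁺ * (y v)⁻ * B u v
        - ∑ u, ∑ v, (x u)⁻ * (y v)⁺ * B u v + ∑ u, ∑ v, (x u)⁻ * (y v)⁻ * B u v := by
    simp_rw [← Finset.sum_sub_distrib, ← Finset.sum_add_distrib]
    refine Finset.sum_congr rfl fun u _ => Finset.sum_congr rfl fun v _ => ?_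
    conv_lhs => rw [← posPart_sub_negPart (x u), ← posPart_sub_negPart (y v)]
    ring
  have pp : ∀ (z : Fin n → ℝ) u, (z u)⁺ ≤ |z u| := fun z u => by
    rw [← posPart_add_negPart]; linarith [negPart_nonneg (z u)]
  have np : ∀ (z : Fin n → ℝ) u, (z u)⁻ ≤ |z u| := fun z u => by
    rw [← posPart_add_negPart]; linarith [posPart_nonneg (z u)]
  have p0 : ∀ (z : Fin n → ℝ) u, 0 ≤ (z u)⁺ := fun z u => posPart_nonneg _
  have n0 : ∀ (z : Fin n → ℝ) u, 0 ≤ (z u)⁻ := fun z u => negPart_nonneg _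
  have k1 := abs_le.1 (key _ _ (p0 x) (p0 y) (pp x) (pp y))
  have k2 := abs_le.1 (key _ _ (p0 x) (n0 y) (pp x) (np y))
  have k3 := abs_le.1 (key _ _ (n0 x) (p0 y) (np x) (pp y))
  have k4 := abs_le.1 (key _ _ (n0 x) (n0 y) (np x) (np y))
  rw [e]
  refine abs_le.2 ⟨?_, ?_⟩ <;> linarith [k1.1, k1.2, k2.1, k2.2, k3.1, k3.2, k4.1, k4.2]

lemma sq_sqnorm {n : ℕ} (x : Fin n → ℝ) : sqnorm x ^ 2 = ∑ u, x u ^ 2 :=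
  Real.sq_sqrt (Finset.sum_nonneg fun _ _ => sq_nonneg _)

lemma opNorm_le_of_bilin_le {n : ℕ} {M : Matrix (Fin n) (Fin n) ℝ} {R : ℝ} (hR : 0 ≤ R)
    (h : ∀ y x : Fin n → ℝ, ∑ u, ∑ v, y u * x v * M u v ≤ R * sqnorm y * sqnorm x) :
    opNorm M ≤ R := by
  refine Real.sSup_le ?_ hR
  rintro t ⟨x, hx, rfl⟩
  have key := h (M.mulVec x) x
  have e : ∑ u, ∑ v, M.mulVec x u * x v * M u v = sqnorm (M.mulVec x) ^ 2 := by
    rw [sq_sqnorm]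
    refine Finset.sum_congr rfl fun u _ => ?_
    rw [sq]
    conv_rhs => rw [Matrix.mulVec, dotProduct, Finset.mul_sum]
    exact Finset.sum_congr rfl fun v _ => by
      rw [Matrix.mulVec, dotProduct]; ring
  rw [e, hx, mul_one, sq] at key
  rcases (sqnorm_nonneg (M.mulVec x)).eq_or_lt with h0 | h0
  · rw [← h0]; exact hR
  · exact le_of_mul_le_mul_right key h0

lemma sum_abs_mul_abs_le {n : ℕ} (x y : Fin n → ℝ) :
    ∑ u, |y u| * |x u| ≤ sqnorm y * sqnorm x := by
  simpa [sqnorm] using Real.sum_mul_le_sqrt_mul_sqrt Finset.univ (fun u => |y u|) fun u => |x u|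

lemma sum_abs_le_sqrt_mul_sqnorm {n : ℕ} (x : Fin n → ℝ) : ∑ u, |x u| ≤ √n * sqnorm x := by
  simpa [sqnorm] using sum_abs_mul_abs_le x fun _ : Fin n => (1 : ℝ)

lemma abs_inv_sqrt_sub_inv_sqrt_le {a p τ Δ : ℝ} (hτ : 0 < τ) (ha : τ ≤ a) (hp : τ ≤ p)
    (h : |a - p| ≤ Δ) : |(√a)⁻¹ - (√p)⁻¹| ≤ Δ / (2 * τ * √τ) := by
  have hs : 0 < √τ := Real.sqrt_pos.2 hτ
  have hsa : √τ ≤ √a := Real.sqrt_le_sqrt ha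
  have hsp : √τ ≤ √p := Real.sqrt_le_sqrt hp
  have ha0 : 0 < √a := hs.trans_le hsa
  have hp0 : 0 < √p := hs.trans_le hsp
  have e : (√a)⁻¹ - (√p)⁻¹ = (p - a) / (√a * √p * (√a + √p)) := by
    have h1 := Real.sq_sqrt (hτ.le.trans ha)
    have h2 := Real.sq_sqrt (hτ.le.trans hp)
    field_simp
    linear_combination h2 - h1
  rw [e, abs_div, abs_sub_comm, abs_of_pos (a := √a * √p * (√a + √p)) (by positivity)]
  have hden : 2 * τ * √τ ≤ √a * √p * (√a + √p) := by
    calc 2 * τ * √τ = √τ * √τ * (√τ + √τ) := by rw [Real.mul_self_sqrt hτ.le]; ring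
      _ ≤ _ := by gcongr
  have hΔ : 0 ≤ Δ := (abs_nonneg _).trans h
  gcongr

lemma inv_sqrt_le_inv_sqrt {a τ : ℝ} (hτ : 0 < τ) (ha : τ ≤ a) : (√a)⁻¹ ≤ (√τ)⁻¹ :=
  inv_anti₀ (Real.sqrt_pos.2 hτ) (Real.sqrt_le_sqrt ha)

lemma abs_inv_sqrt_mul_sub_le {a b p q τ Δ : ℝ} (hτ : 0 < τ) (ha : τ ≤ a) (hb : τ ≤ b)
    (hp : τ ≤ p) (hq : τ ≤ q) (h : |a - p| ≤ Δ) (h' : |b - q| ≤ Δ) :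
    |(√a)⁻¹ * (√b)⁻¹ - (√p)⁻¹ * (√q)⁻¹| ≤ Δ / τ ^ 2 := by
  have hs : 0 < √τ := Real.sqrt_pos.2 hτ
  have hΔ : 0 ≤ Δ := (abs_nonneg _).trans h
  have h1 := abs_inv_sqrt_sub_inv_sqrt_le hτ ha hp h
  have h2 := abs_inv_sqrt_sub_inv_sqrt_le hτ hb hq h'
  have h3 := inv_sqrt_le_inv_sqrt hτ hb
  have h4 := inv_sqrt_le_inv_sqrt hτ hp
  have e : (√a)⁻¹ * (√b)⁻¹ - (√p)⁻¹ * (√q)⁻¹ =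
      ((√a)⁻¹ - (√p)⁻¹) * (√b)⁻¹ + (√p)⁻¹ * ((√b)⁻¹ - (√q)⁻¹) := by ring
  rw [e]
  calc _ ≤ |((√a)⁻¹ - (√p)⁻¹) * (√b)⁻¹| + |(√p)⁻¹ * ((√b)⁻¹ - (√q)⁻¹)| := abs_add_le _ _
    _ = |(√a)⁻¹ - (√p)⁻¹| * (√b)⁻¹ + (√p)⁻¹ * |(√b)⁻¹ - (√q)⁻¹| := by
        rw [abs_mul, abs_mul, abs_of_nonneg (inv_nonneg.2 (Real.sqrt_nonneg b)),
          abs_of_nonneg (inv_nonneg.2 (Real.sqrt_nonneg p))]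
    _ ≤ Δ / (2 * τ * √τ) * (√τ)⁻¹ + (√τ)⁻¹ * (Δ / (2 * τ * √τ)) := by gcongr
    _ = Δ / τ ^ 2 := by
        have := Real.sq_sqrt hτ.le
        field_simp
        rw [this]; ring

lemma sqnorm_scale_le {n : ℕ} {J : Finset (Fin n)} {c : ℝ} {α x : Fin n → ℝ} (hc : 0 ≤ c)
    (h0 : ∀ u, 0 ≤ α u) (hα : ∀ u, α u ≤ c) :
    sqnorm (fun u => if u ∈ J then x u * α u else 0) ≤ sqnorm x * c := by
  have e : sqnorm x * c = sqnorm fun u => x u * c := by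
    unfold sqnorm
    simp_rw [mul_pow]
    rw [← Finset.sum_mul, Real.sqrt_mul' _ (sq_nonneg c), Real.sqrt_sq hc]
  rw [e]
  refine sqnorm_le_sqnorm fun u => ?_
  split_ifs
  · rw [abs_mul, abs_mul, abs_of_nonneg (h0 u), abs_of_nonneg hc]
    exact mul_le_mul_of_nonneg_left (hα u) (abs_nonneg _)
  · rw [abs_zero]; exact abs_nonneg _

lemma opNorm_lap_sub_le {n : ℕ} (hn : 0 < n) {A : Adj n} {P : Matrix (Fin n) (Fin n) ℝ}
    {J : Finset (Fin n)} {d τ D K Δ : ℝ} (hτ : 0 < τ) (hd : Real.exp 1 ≤ d) (hD : 0 ≤ D)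
    (hK : 0 ≤ K) (hΔ : 0 ≤ Δ) (hP : ∀ u v, 0 ≤ P u v ∧ P u v ≤ 1) (hPd : ∀ u v, P u v ≤ d / n)
    (hA : ∀ u, A u u = false) (hB : RectangleBounds (centered P A) J d D K)
    (hdeg : ∀ u ∈ J, |∑ v, (aVal A u v - P u v)| ≤ Δ) :
    opNorm (restrictM (lap (addReg A τ) - lap (fun u v => P u v + τ / n)) J) ≤
      (4 * (4 * D + 20 * K) * √(d * Real.log d) + 1) / τ + (d + τ) * Δ / τ ^ 2 := by
  have hn' : (0 : ℝ) < n := by exact_mod_cast hn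
  have hd0 : 0 < d := (Real.exp_pos 1).trans_le hd
  have hs : 0 < √τ := Real.sqrt_pos.2 hτ
  set a : Fin n → ℝ := fun u => ∑ w, (aVal A u w + τ / n) with ha
  set p : Fin n → ℝ := fun u => ∑ w, (P u w + τ / n) with hp
  have hreg : ∑ _w : Fin n, τ / n = τ := by
    rw [Finset.sum_const, Finset.card_univ, Fintype.card_fin, nsmul_eq_mul]
    field_simp
  have haτ : ∀ u, τ ≤ a u := fun u => by
    rw [ha]; dsimp only
    rw [Finset.sum_add_distrib, hreg]
    refine le_add_of_nonneg_left (Finset.sum_nonneg fun w _ => ?_)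
    unfold aVal; split_ifs <;> norm_num
  have hpτ : ∀ u, τ ≤ p u := fun u => by
    rw [hp]; dsimp only
    rw [Finset.sum_add_distrib, hreg]
    exact le_add_of_nonneg_left (Finset.sum_nonneg fun w _ => (hP u w).1)
  have hap : ∀ u ∈ J, |a u - p u| ≤ Δ := fun u hu => by
    have : a u - p u = ∑ v, (aVal A u v - P u v) := by
      rw [ha, hp]; dsimp only
      rw [← Finset.sum_sub_distrib]
      exact Finset.sum_congr rfl fun v _ => by ring
    rw [this]; exact hdeg u hu
  set α : Fin n → ℝ := fun u => (√(a u))⁻¹ with hα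
  have hα0 : ∀ u, 0 ≤ α u := fun u => inv_nonneg.2 (Real.sqrt_nonneg _)
  have hατ : ∀ u, α u ≤ (√τ)⁻¹ := fun u => inv_sqrt_le_inv_sqrt hτ (haτ u)
  refine opNorm_le_of_bilin_le (by positivity) fun y x => ?_
  set y' : Fin n → ℝ := fun u => if u ∈ J then y u * α u else 0 with hy'
  set x' : Fin n → ℝ := fun u => if u ∈ J then x u * α u else 0 with hx'
  set R : Fin n → Fin n → ℝ := fun u v => if u ∈ J ∧ v ∈ J then
    (P u v + τ / n) * (α u * α v - (√(p u))⁻¹ * (√(p v))⁻¹) else 0 with hR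
  have hentry : ∀ u v, y u * x v *
      restrictM (lap (addReg A τ) - lap (fun u v => P u v + τ / n)) J u v =
      y' u * x' v * centered P A u v - (if u = v then y' u * x' u * P u u else 0)
        + y u * x v * R u v := by
    intro u v
    by_cases hu : u ∈ J
    · by_cases hv : v ∈ J
      · have e1 : lap (addReg A τ) u v = (aVal A u v + τ / n) * (α u * α v) := by
          change (aVal A u v + τ / n) / √(a u * a v) = _
          rw [Real.sqrt_mul (hτ.le.trans (haτ u)), div_eq_mul_inv, mul_inv]
        have e2 : lap (fun u v => P u v + τ / n) u v =
            (P u v + τ / n) * ((√(p u))⁻¹ * (√(p v))⁻¹) := by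
          change (P u v + τ / n) / √(p u * p v) = _
          rw [Real.sqrt_mul (hτ.le.trans (hpτ u)), div_eq_mul_inv, mul_inv]
        simp only [restrictM, hy', hx', hR, hu, hv, and_self, if_true, Matrix.sub_apply, e1, e2,
          centered]
        by_cases huv : u = v
        · subst huv
          simp only [if_true, aVal, hA u, Bool.false_eq_true, if_false]
          ring
        · simp only [huv, if_false]
          ring
      · have huv : u ≠ v := fun h => hv (h ▸ hu)
        simp [restrictM, hx', hR, hv, huv]
    · simp [restrictM, hy', hR, hu]
  simp_rw [hentry, Finset.sum_add_distrib, Finset.sum_sub_distrib, Finset.sum_ite_eq,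
    Finset.mem_univ, if_true]
  have hsy : sqnorm y' ≤ sqnorm y * (√τ)⁻¹ := sqnorm_scale_le (by positivity) hα0 hατ
  have hsx : sqnorm x' ≤ sqnorm x * (√τ)⁻¹ := sqnorm_scale_le (by positivity) hα0 hατ
  have hy0 := sqnorm_nonneg y
  have hx0 := sqnorm_nonneg x
  have hyx : sqnorm y' * sqnorm x' ≤ sqnorm y * sqnorm x / τ := by
    calc _ ≤ (sqnorm y * (√τ)⁻¹) * (sqnorm x * (√τ)⁻¹) :=
          mul_le_mul hsy hsx (sqnorm_nonneg _) (by positivity)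
      _ = sqnorm y * sqnorm x / (√τ * √τ) := by field_simp
      _ = _ := by rw [Real.mul_self_sqrt hτ.le]
  have t1 : ∑ u, ∑ v, y' u * x' v * centered P A u v ≤
      4 * (4 * D + 20 * K) * √(d * Real.log d) * (sqnorm y * sqnorm x / τ) := by
    refine (le_abs_self _).trans ((hB.bilin_le hn hd hD hK (fun u hu => by simp [hy', hu])
      fun u hu => by simp [hx', hu]).trans ?_)
    rw [mul_assoc]
    exact mul_le_mul_of_nonneg_left hyx (by positivity)
  have t2 : -∑ u, y' u * x' u * P u u ≤ sqnorm y * sqnorm x / τ := by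
    refine le_trans ?_ ((sum_abs_mul_abs_le x' y').trans hyx)
    rw [← Finset.sum_neg_distrib]
    refine Finset.sum_le_sum fun u _ => (neg_le_abs _).trans ?_
    rw [abs_mul, abs_mul, abs_of_nonneg (hP u u).1]
    exact mul_le_of_le_one_right (by positivity) (hP u u).2
  have t3 : ∑ u, ∑ v, y u * x v * R u v ≤ (d + τ) * Δ / τ ^ 2 * (sqnorm y * sqnorm x) := by
    have hRb : ∀ u v, |R u v| ≤ (d + τ) / n * (Δ / τ ^ 2) := by
      intro u v
      simp only [hR]
      split_ifs with h
      · rw [abs_mul]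
        refine mul_le_mul ?_ (abs_inv_sqrt_mul_sub_le hτ (haτ u) (haτ v) (hpτ u) (hpτ v)
          (hap u h.1) (hap v h.2)) (abs_nonneg _) (by positivity)
        rw [abs_of_nonneg (add_nonneg (hP u v).1 (by positivity)), add_div]
        linarith [hPd u v]
      · rw [abs_zero]; positivity
    calc ∑ u, ∑ v, y u * x v * R u v
        ≤ ∑ u, ∑ v, |y u| * |x v| * ((d + τ) / n * (Δ / τ ^ 2)) := by
          refine Finset.sum_le_sum fun u _ => Finset.sum_le_sum fun v _ =>
            (le_abs_self _).trans ?_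
          rw [abs_mul, abs_mul]
          exact mul_le_mul_of_nonneg_left (hRb u v) (by positivity)
      _ = (∑ u, |y u|) * (∑ v, |x v|) * ((d + τ) / n * (Δ / τ ^ 2)) := by
          rw [Finset.sum_mul_sum]
          simp_rw [Finset.sum_mul]
      _ ≤ (√n * sqnorm y) * (√n * sqnorm x) * ((d + τ) / n * (Δ / τ ^ 2)) := by
          gcongr
          · exact sum_abs_le_sqrt_mul_sqnorm y
          · exact sum_abs_le_sqrt_mul_sqnorm x
      _ = (√n * √n) / n * ((d + τ) * Δ / τ ^ 2 * (sqnorm y * sqnorm x)) := by ring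
      _ = _ := by rw [Real.mul_self_sqrt hn'.le, div_self hn'.ne', one_mul]
  calc _ = ∑ u, ∑ v, y' u * x' v * centered P A u v + -∑ u, y' u * x' u * P u u +
        ∑ u, ∑ v, y u * x v * R u v := by ring
    _ ≤ _ := add_le_add (add_le_add t1 t2) t3
    _ = _ := by ring

lemma aVal_nonneg {n : ℕ} (A : Adj n) (u v : Fin n) : 0 ≤ aVal A u v := by
  unfold aVal; split_ifs <;> norm_num

lemma sqrt_mul_log_le {d : ℝ} (hd : 0 < d) : √(d * Real.log d) ≤ d := by
  refine Real.sqrt_le_iff.2 ⟨hd.le, ?_⟩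
  rw [sq]
  exact mul_le_mul_of_nonneg_left ((Real.log_le_sub_one_of_pos hd).trans (by linarith)) hd.le

lemma one_le_sqrt_mul_log {d : ℝ} (hd : Real.exp 1 ≤ d) : 1 ≤ √(d * Real.log d) := by
  have hd0 : 0 < d := (Real.exp_pos 1).trans_le hd
  have h1 : 1 ≤ d := (Real.one_le_exp zero_le_one).trans hd
  exact Real.one_le_sqrt.2 (one_le_mul_of_one_le_of_one_le h1
    ((Real.le_log_iff_exp_le hd0).2 hd))

/-- The nodes whose degree deviates from its mean by less than `Δ`. -/
noncomputable def typicalNodes {n : ℕ} (P : Matrix (Fin n) (Fin n) ℝ) (A : Adj n) (Δ : ℝ) :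
    Finset (Fin n) :=
  Finset.univ.filter fun u => |∑ v, centered P A u v| < Δ

lemma sub_card_typicalNodes_le {n : ℕ} {P : Matrix (Fin n) (Fin n) ℝ} {A : Adj n} {d Δ : ℝ}
    (hd : 0 < d)
    (h : ∀ S : Finset (Fin n), (n : ℝ) / (2 * d) < S.card →
      |∑ u ∈ S, ∑ v, centered P A u v| < S.card * Δ) :
    (n : ℝ) - (typicalNodes P A Δ).card ≤ n / d := by
  set F := Finset.univ.filter fun u => Δ ≤ ∑ v, centered P A u v with hF
  set G := Finset.univ.filter fun u => ∑ v, centered P A u v ≤ -Δ with hG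
  have hFc : (F.card : ℝ) ≤ n / (2 * d) := by
    by_contra hc
    have h1 := (le_abs_self _).trans_lt (h F (not_le.1 hc))
    have h2 := Finset.card_nsmul_le_sum F (fun u => ∑ v, centered P A u v) Δ
      fun u hu => (Finset.mem_filter.1 hu).2
    rw [nsmul_eq_mul] at h2
    linarith
  have hGc : (G.card : ℝ) ≤ n / (2 * d) := by
    by_contra hc
    have h1 := (neg_le_abs _).trans_lt (h G (not_le.1 hc))
    have h2 := Finset.sum_le_card_nsmul G (fun u => ∑ v, centered P A u v) (-Δ)
      fun u hu => (Finset.mem_filter.1 hu).2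
    rw [nsmul_eq_mul] at h2
    linarith
  have hcov : Finset.univ ⊆ typicalNodes P A Δ ∪ (F ∪ G) := by
    intro u _
    simp only [typicalNodes, hF, hG, Finset.mem_union, Finset.mem_filter, Finset.mem_univ,
      true_and]
    by_contra hc
    push Not at hc
    exact absurd (abs_lt.2 ⟨hc.2.2, hc.2.1⟩) (not_lt.2 hc.1)
  have hcard : (n : ℝ) ≤ (typicalNodes P A Δ).card + (F.card + G.card) := by
    have h1 := (Finset.card_le_card hcov).trans ((Finset.card_union_le _ _).trans
      (Nat.add_le_add_left (Finset.card_union_le _ _) _))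
    rw [Finset.card_univ, Fintype.card_fin] at h1
    exact_mod_cast h1
  have e : (n : ℝ) / d = n / (2 * d) + n / (2 * d) := by field_simp; ring
  linarith

lemma rectangleBounds_typicalNodes {n : ℕ} (hn : 0 < n) {P : Matrix (Fin n) (Fin n) ℝ}
    {A : Adj n} {d D Δ K : ℝ} (hPsym : ∀ u v, P u v = P v u)
    (hP : ∀ u v, 0 ≤ P u v ∧ P u v ≤ 1) (hPd : ∀ u v, P u v ≤ d / n)
    (hA : ∀ u v, A u v = A v u) (hΔ : Δ + 2 * d ≤ D * d)
    (hdisc : ∀ S T : Finset (Fin n), S.Nonempty → T.Nonempty →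
      |∑ u ∈ S, ∑ v ∈ T, centered P A u v| ≤ discBound n d K S.card T.card) :
    RectangleBounds (centered P A) (typicalNodes P A Δ) d D K := by
  have hn' : (0 : ℝ) < n := by exact_mod_cast hn
  have habs : ∀ u v, |centered P A u v| ≤ centered P A u v + 2 * P u v := by
    intro u v
    have h1 := (hP u v).1
    have h2 := aVal_nonneg A u v
    unfold centered
    split_ifs
    · simpa using h1
    · exact abs_le.2 ⟨by linarith, by linarith⟩
  have hPrs : ∀ u, ∑ v, P u v ≤ d := by
    intro u
    refine (Finset.sum_le_sum fun v _ => hPd u v).trans_eq ?_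
    rw [Finset.sum_const, Finset.card_univ, Fintype.card_fin, nsmul_eq_mul]
    field_simp
  have hrs : ∀ u ∈ typicalNodes P A Δ, ∑ v, |centered P A u v| ≤ D * d := by
    intro u hu
    have h1 := (le_abs_self _).trans_lt (Finset.mem_filter.1 hu).2
    have h2 := Finset.sum_le_sum fun v (_ : v ∈ Finset.univ) => habs u v
    rw [Finset.sum_add_distrib, ← Finset.mul_sum] at h2
    linarith [hPrs u]
  have hrow : ∀ S ⊆ typicalNodes P A Δ, ∀ T,
      |∑ u ∈ S, ∑ v ∈ T, centered P A u v| ≤ D * d * S.card := by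
    intro S hS T
    calc |∑ u ∈ S, ∑ v ∈ T, centered P A u v|
        ≤ ∑ u ∈ S, ∑ v ∈ T, |centered P A u v| :=
          (Finset.abs_sum_le_sum_abs _ _).trans
            (Finset.sum_le_sum fun u _ => Finset.abs_sum_le_sum_abs _ _)
      _ ≤ ∑ u ∈ S, D * d := Finset.sum_le_sum fun u hu =>
          (Finset.sum_le_sum_of_subset_of_nonneg (Finset.subset_univ T)
            fun _ _ _ => abs_nonneg _).trans (hrs u (hS hu))
      _ = D * d * S.card := by rw [Finset.sum_const, nsmul_eq_mul]; ring
  have hsym : ∀ u v, centered P A u v = centered P A v u := by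
    intro u v
    unfold centered aVal
    rw [hA u v, hPsym u v]
    simp only [eq_comm]
  refine ⟨hrow, fun S T hT => ?_, hdisc⟩
  have e : ∑ u ∈ S, ∑ v ∈ T, centered P A u v = ∑ v ∈ T, ∑ u ∈ S, centered P A v u :=
    Finset.sum_comm.trans (Finset.sum_congr rfl fun v _ => Finset.sum_congr rfl fun u _ => hsym u v)
  exact e ▸ hrow T hT S

lemma opNorm_restrictM_typicalNodes_le {n : ℕ} (hn : 0 < n) {P : Matrix (Fin n) (Fin n) ℝ}
    {A : Adj n} {d τ K K' : ℝ} (hτ : 0 < τ) (hd : Real.exp 1 ≤ d) (hK : 0 ≤ K) (hK' : 0 ≤ K')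
    (hPsym : ∀ u v, P u v = P v u) (hP : ∀ u v, 0 ≤ P u v ∧ P u v ≤ 1)
    (hPd : ∀ u v, P u v ≤ d / n) (hA0 : ∀ u, A u u = false) (hA : ∀ u v, A u v = A v u)
    (hdisc : ∀ S T : Finset (Fin n), S.Nonempty → T.Nonempty →
      |∑ u ∈ S, ∑ v ∈ T, centered P A u v| ≤ discBound n d K S.card T.card) :
    opNorm (restrictM (lap (addReg A τ) - lap (fun u v => P u v + τ / n))
        (typicalNodes P A (K' * √(d * Real.log d)))) ≤
      (17 * K' + 80 * K + 34) * (√(d * Real.log d) * (d + τ) / τ ^ 2 + √d / τ) := by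
  have hd0 : 0 < d := (Real.exp_pos 1).trans_le hd
  have hs1 := one_le_sqrt_mul_log hd
  have hsd := sqrt_mul_log_le hd0
  set s := √(d * Real.log d) with hs
  have hrect : RectangleBounds (centered P A) (typicalNodes P A (K' * s)) d (K' + 2) K :=
    rectangleBounds_typicalNodes hn hPsym hP hPd hA (by nlinarith) hdisc
  have hdeg : ∀ u ∈ typicalNodes P A (K' * s), |∑ v, (aVal A u v - P u v)| ≤ (K' + 1) * s := by
    intro u hu
    have h1 := (Finset.mem_filter.1 hu).2
    have e : ∑ v, (aVal A u v - P u v) = ∑ v, centered P A u v - P u u := by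
      have h2 : ∀ v, aVal A u v - P u v = centered P A u v - if u = v then P u u else 0 := by
        intro v
        unfold centered
        split_ifs with h
        · subst h; simp [aVal, hA0]
        · simp
      simp_rw [h2]
      rw [Finset.sum_sub_distrib]
      simp
    rw [e]
    have h3 := abs_lt.1 h1
    have h4 := hP u u
    exact abs_le.2 ⟨by linarith [h3.1, h4.2], by linarith [h3.2, h4.1]⟩
  refine (opNorm_lap_sub_le hn hτ hd (by positivity) hK (by positivity) hP hPd hA0 hrect
    hdeg).trans ?_
  rw [← hs]
  have h1 : (4 * (4 * (K' + 2) + 20 * K) * s + 1) / τ ≤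
      (16 * K' + 80 * K + 33) * (s * (d + τ) / τ ^ 2) := by
    have e : (16 * K' + 80 * K + 33) * (s * (d + τ) / τ ^ 2) =
        (16 * K' + 80 * K + 33) * s / τ + (16 * K' + 80 * K + 33) * s * d / τ ^ 2 := by
      field_simp; ring
    rw [e]
    refine le_add_of_le_of_nonneg ?_ (by positivity)
    gcongr
    linarith
  have h2 : 0 ≤ (17 * K' + 80 * K + 34) * (√d / τ) := by positivity
  calc _ ≤ (16 * K' + 80 * K + 33) * (s * (d + τ) / τ ^ 2) + (d + τ) * ((K' + 1) * s) / τ ^ 2 :=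
        add_le_add_left h1 _
    _ = (17 * K' + 80 * K + 34) * (s * (d + τ) / τ ^ 2) := by ring
    _ ≤ _ := by
        rw [mul_add _ _ (√d / τ)]; exact le_add_of_nonneg_right h2

lemma one_sub_prob_le {n : ℕ} {P : Matrix (Fin n) (Fin n) ℝ}
    (hP : ∀ u v, 0 ≤ P u v ∧ P u v ≤ 1) {good bad : Set (Adj n)}
    (h : ∀ A, (∀ u, A u u = false) → (∀ u v, A u v = A v u) → A ∉ bad → A ∈ good) :
    1 - prob P bad ≤ prob P good := by
  rw [sub_le_iff_le_add, ← sum_weight P, prob, prob, ← Finset.sum_add_distrib]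
  refine Finset.sum_le_sum fun A _ => ?_
  have hw := weight_nonneg hP A
  have hg : 0 ≤ good.indicator (weight P) A := Set.indicator_nonneg (fun A _ => weight_nonneg hP A) A
  have hb : 0 ≤ bad.indicator (weight P) A := Set.indicator_nonneg (fun A _ => weight_nonneg hP A) A
  by_cases hA : (∀ u, A u u = false) ∧ (∀ u v, A u v = A v u)
  · by_cases hbad : A ∈ bad
    · rw [Set.indicator_of_mem hbad]; linarith
    · rw [Set.indicator_of_mem (h A hA.1 hA.2 hbad)]; linarith
  · rw [weight, if_neg hA]; linarith

lemma le_pmax {n : ℕ} {P : Matrix (Fin n) (Fin n) ℝ} (hP : ∀ u v, 0 ≤ P u v ∧ P u v ≤ 1)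
    (u v : Fin n) : P u v ≤ pmax P :=
  le_csSup ⟨1, by rintro x ⟨u, v, rfl⟩; exact (hP u v).2⟩ ⟨u, v, rfl⟩

lemma pmax_nonneg {n : ℕ} {P : Matrix (Fin n) (Fin n) ℝ} (hP : ∀ u v, 0 ≤ P u v ∧ P u v ≤ 1) :
    0 ≤ pmax P :=
  Real.sSup_nonneg (by rintro x ⟨u, v, rfl⟩; exact (hP u v).1)

/-- Lemma 10 (Laplacian concentration on a large subset of nodes). -/
theorem statement_19 (C' : ℝ) (hC' : 0 < C') :
    ∃ C : ℝ, 0 < C ∧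
      ∀ (n : ℕ) (P : Matrix (Fin n) (Fin n) ℝ) (τ : ℝ), 0 < τ →
        (∀ u v, P u v = P v u) → (∀ u v, 0 ≤ P u v ∧ P u v ≤ 1) →
        1 - (n : ℝ) ^ (-C') ≤ prob P
          { A | ∃ J : Finset (Fin n),
              (n : ℝ) - J.card ≤
                (n : ℝ) / (Real.exp 1 * ((n : ℝ) * pmax P + 1)) ∧
              opNorm (restrictM
                  (lap (addReg A τ) - lap (fun u v => P u v + τ / n)) J) ≤
                C * (Real.sqrt ((Real.exp 1 * ((n : ℝ) * pmax P + 1)) *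
                      Real.log (Real.exp 1 * ((n : ℝ) * pmax P + 1))) *
                    ((Real.exp 1 * ((n : ℝ) * pmax P + 1)) + τ) / τ ^ 2 +
                  Real.sqrt (Real.exp 1 * ((n : ℝ) * pmax P + 1)) / τ) } := by
  refine ⟨17 * (16 + 3 * (C' + 4)) + 80 * (16 * (2 * (C' + 4))) + 34, by positivity, ?_⟩
  intro n P τ hτ hsym hP
  have hpm := pmax_nonneg hP
  have hd : Real.exp 1 ≤ Real.exp 1 * ((n : ℝ) * pmax P + 1) :=
    le_mul_of_one_le_right (Real.exp_pos 1).le (le_add_of_nonneg_left (by positivity))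
  have hPd : ∀ u v, P u v ≤ Real.exp 1 * ((n : ℝ) * pmax P + 1) / n := by
    intro u v
    have hn' : (0 : ℝ) < n := by exact_mod_cast u.pos
    rw [le_div_iff₀ hn', mul_comm]
    calc (n : ℝ) * P u v ≤ n * pmax P + 1 :=
          (mul_le_mul_of_nonneg_left (le_pmax hP u v) hn'.le).trans (le_add_of_nonneg_right
            zero_le_one)
      _ ≤ _ := le_mul_of_one_le_left (by positivity) (Real.one_le_exp zero_le_one)
  generalize Real.exp 1 * ((n : ℝ) * pmax P + 1) = d at hd hPd ⊢
  have hd0 : 0 < d := (Real.exp_pos 1).trans_le hd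
  have hlog : 0 ≤ Real.log d := Real.log_nonneg ((Real.one_le_exp zero_le_one).trans hd)
  rcases n.eq_zero_or_pos with rfl | hn
  · refine le_trans ?_ (one_sub_prob_le hP (bad := ∅) fun A _ _ _ => ⟨∅, by simp, ?_⟩)
    · rw [Nat.cast_zero, Real.zero_rpow (neg_ne_zero.2 hC'.ne')]
      simp [prob]
    · refine (opNorm_le_of_bilin_le le_rfl fun y x => by simp [sqnorm]).trans ?_
      positivity
  · refine (sub_le_sub_left (prob_bad_le hn hsym hP hd hPd hC') 1).trans
      (one_sub_prob_le hP fun A hA0 hA hbad => ?_)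
    simp only [Set.mem_union, Set.mem_ofPred_eq, not_or, not_exists, not_and, not_le] at hbad
    exact ⟨_, sub_card_typicalNodes_le hd0 hbad.2,
      opNorm_restrictM_typicalNodes_le hn hτ hd (by positivity) (by positivity) hsym hP hPd hA0 hA
        fun S T hS hT => (hbad.1 S hS T hT).le⟩

end SBM
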